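/- Let n ≥ 2 and let K ⊂ ℝ^{n+1} be a smooth, strictly convex body with the origin in its interior, whose support function h, radial function r, and Gauss curvature 𝒦 satisfy h^{p-1} |Dh|^{n+1-q} 𝒦 = 1 on S^n, with −(n+1) < p and n ≤ q ≤ n+1. Set α = q − n − 1 and dV = h σ_n dμ with σ_n = 1/𝒦. Then ∫ | r^{α} ∇̄h − (∫ r^{α} ∇̄h dV)/(∫ dV) |² dV ≤ ((p+1)/n) |∫ r^{α} ∇̄h dV|² / ∫ dV, where |·| is the Euclidean norm on ℝ^{n+1}. In particular, if in addition p ≤ −1, then h is constant. -/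

import Mathlib

open MeasureTheory Matrix Metric
open scoped RealInnerProductSpace

noncomputable section

/-- Euclidean space `ℝ^{n+1}`. -/
abbrev Euc (n : ℕ) : Type := EuclideanSpace ℝ (Fin (n + 1))

/-- The Euclidean Hessian matrix of `H : ℝ^{n+1} → ℝ` at `x`. -/
def ehess (n : ℕ) (H : Euc n → ℝ) (x : Euc n) : Matrix (Fin (n + 1)) (Fin (n + 1)) ℝ :=
  Matrix.of fun i j =>
    fderiv ℝ (fun y => fderiv ℝ H y (EuclideanSpace.single j 1)) x (EuclideanSpace.single i 1)

/-- For the 1-homogeneous extension `H` of the support function `h` and `x ∈ S^n`, the matrix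
`D²H(x) + h(x)·x xᵀ`.  Its restriction to the tangent space `x^⊥ = T_x S^n` is
`A[h] = ∇̄²h + h ḡ`, and `x` is an eigenvector with eigenvalue `h(x)`. -/
def bmat (n : ℕ) (H : Euc n → ℝ) (x : Euc n) : Matrix (Fin (n + 1)) (Fin (n + 1)) ℝ :=
  ehess n H x + Matrix.of fun i j => H x * (x i * x j)

/-- `σ_n = det A[h] = det(∇̄²h + h ḡ)/det ḡ`, computed as `det(bmat)/h`. -/
def sigman (n : ℕ) (H : Euc n → ℝ) (x : Euc n) : ℝ :=
  Matrix.det (bmat n H x) / H x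

/-- The Gauss curvature `𝒦 = 1/σ_n`. -/
def gaussCurv (n : ℕ) (H : Euc n → ℝ) (x : Euc n) : ℝ := (sigman n H x)⁻¹

/-- The round (spherical) gradient `∇̄f` at `x ∈ S^n`: the Euclidean gradient of the
0-homogeneous extension `y ↦ f(y/‖y‖)`.  It depends only on `f|_{S^n}` and lies in `T_x S^n`. -/
def sphGrad (n : ℕ) (f : Euc n → ℝ) (x : Euc n) : Euc n :=
  gradient (fun y => f (‖y‖⁻¹ • y)) x

/-- The function `log (h^{n+2}/𝒦)` (as a function of `y`; on the sphere it agrees with the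
centro-affine expression appearing in the paper). -/
def logQ (n : ℕ) (H : Euc n → ℝ) (y : Euc n) : ℝ :=
  Real.log ((H y) ^ (n + 2) / gaussCurv n H y)

/-- The centro-affine inner product `g(∇f, ∇u) = h ⟨A[h]⁻¹ ∇̄f, ∇̄u⟩` of the `g`-gradients of
`f` and `u`, where `g = A[h]/h` is the centro-affine metric. -/
def gInner (n : ℕ) (H f u : Euc n → ℝ) (x : Euc n) : ℝ :=
  H x * ∑ i, (bmat n H x)⁻¹.mulVec (fun j => sphGrad n f x j) i * sphGrad n u x i

/-- The squared centro-affine norm `|∇f|_g²` of the `g`-gradient of `f`. -/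
def gNormSq (n : ℕ) (H f : Euc n → ℝ) (x : Euc n) : ℝ := gInner n H f f x

/-- The centro-affine Laplacian `Δf = div_g(∇ f)` (with respect to the centro-affine connection
`∇` induced by the centro-affine normal `ξ = X`, and the centro-affine metric `g = A[h]/h`),
computed via the identity `Δf = tr_g(A[hf]/h) - n f`, i.e.
`Δf = tr(B[h]⁻¹ B[hf]) - (n+1) f` where `B[u] = D²ũ + u·x xᵀ` for the 1-homogeneous
extension `ũ` of `u`. -/
def caLap (n : ℕ) (H f : Euc n → ℝ) (x : Euc n) : ℝ :=
  Matrix.trace ((bmat n H x)⁻¹ * bmat n (fun y => H y * f (‖y‖⁻¹ • y)) x) - (n + 1) * f x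

/-- The spherical Lebesgue measure on `S^n ⊂ ℝ^{n+1}` (up to a positive constant). -/
def sphMeasure (n : ℕ) : Measure (sphere (0 : Euc n) 1) :=
  (volume : Measure (Euc n)).toSphere

/-- The density of the cone-volume-type measure `dV = h σ_n dμ` with respect to the spherical
Lebesgue measure. -/
def volDens (n : ℕ) (H : Euc n → ℝ) (x : Euc n) : ℝ := H x * sigman n H x

open Set in
lemma pl_bm1_compact {A B C : Set ℝ} (hA : IsCompact A) (hB : IsCompact B)
    (hA0 : A.Nonempty) (hB0 : B.Nonempty) 
    (h : ∀ a ∈ A, ∀ b ∈ B, (a + b) / 2 ∈ C) :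
    volume A + volume B ≤ 2 * volume C := by
  obtain ⟨a, ha, ha'⟩ := hA.exists_isGreatest hA0
  obtain ⟨b, hb, hb'⟩ := hB.exists_isLeast hB0
  have h1 : (fun x => x + b) '' A ∪ (fun x => x + a) '' B ⊆ (fun x => 2 * x) '' C := by
    rintro x (⟨y, hy, rfl⟩ | ⟨y, hy, rfl⟩)
    · exact ⟨_, h y hy b hb, by ring⟩
    · exact ⟨_, h a ha y hy, by ring⟩
  have h2 : volume ((fun x => x + b) '' A ∪ (fun x => x + a) '' B) = volume A + volume B := by
    rw [measure_union₀ (hB.image (by fun_prop)).measurableSet.nullMeasurableSet]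
    · simp
    · refine measure_mono_null (t := {a + b}) ?_ (by simp)
      rintro x ⟨⟨y, hy, rfl⟩, ⟨z, hz, hzx⟩⟩
      have := ha' hy; have := hb' hz
      simp only at hzx
      simp only [mem_singleton_iff]; linarith
  rw [← h2]
  refine (measure_mono h1).trans ?_
  have := Measure.addHaar_image_homothety (μ := (volume : Measure ℝ)) 0 2 C
  have e : (fun x => 2 * x) '' C = (AffineMap.homothety (0:ℝ) (2:ℝ)) '' C := by
    congr 1; ext x; simp [AffineMap.homothety_apply]
  rw [e, this]; simp

open Set in
lemma pl_bm1 {A B C : Set ℝ} (hA : MeasurableSet A) (hB : MeasurableSet B)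
    (hA0 : A.Nonempty) (hB0 : B.Nonempty) 
    (h : ∀ a ∈ A, ∀ b ∈ B, (a + b) / 2 ∈ C) :
    volume A + volume B ≤ 2 * volume C := by
  rw [hA.measure_eq_iSup_isCompact, hB.measure_eq_iSup_isCompact]
  obtain ⟨a, ha⟩ := hA0
  obtain ⟨b, hb⟩ := hB0
  have key : ∀ K, K ⊆ A → IsCompact K → ∀ L, L ⊆ B → IsCompact L →
      volume K + volume L ≤ 2 * volume C := by
    intro K hK hKc L hL hLc
    calc volume K + volume L ≤ volume (insert a K) + volume (insert b L) := by
          gcongr <;> simp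
      _ ≤ _ := by
          refine pl_bm1_compact (hKc.insert a) (hLc.insert b) (insert_nonempty _ _)
            (insert_nonempty _ _) ?_
          intro x hx y hy
          exact h x (insert_subset ha hK hx) y (insert_subset hb hL hy)
  simp only [iSup_and']
  refine ENNReal.biSup_add_biSup_le' (p := fun K => K ⊆ A ∧ IsCompact K)
    (q := fun L => L ⊆ B ∧ IsCompact L) ⟨∅, empty_subset A, isCompact_empty⟩
    ⟨∅, empty_subset B, isCompact_empty⟩ ?_
  intro K hK L hL
  exact key K hK.1 hK.2 L hL.1 hL.2

open Set in
lemma pl_core {f g k : ℝ → ℝ} (hf : Measurable f) (hg : Measurable g) (hk : Measurable k)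
    (hf0 : ∀ x, 0 ≤ f x) (hg0 : ∀ x, 0 ≤ g x) (hk0 : ∀ x, 0 ≤ k x)
    (hf1 : ∀ x, f x ≤ 1) (hg1 : ∀ x, g x ≤ 1)
    (hfs : ∀ s < 1, ∃ x, s < f x) (hgs : ∀ s < 1, ∃ x, s < g x)
    (h : ∀ x y, f x * g y ≤ k ((x + y) / 2) ^ 2) :
    (∫⁻ x, ENNReal.ofReal (f x)) + (∫⁻ x, ENNReal.ofReal (g x))
      ≤ 2 * ∫⁻ x, ENNReal.ofReal (k x) := by
  rw [lintegral_eq_lintegral_meas_lt _ (.of_forall hf0) hf.aemeasurable,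
    lintegral_eq_lintegral_meas_lt _ (.of_forall hg0) hg.aemeasurable,
    lintegral_eq_lintegral_meas_lt _ (.of_forall hk0) hk.aemeasurable]
  have anti : ∀ f : ℝ → ℝ, Measurable (fun t : ℝ => volume {a | t < f a}) := by
    intro f
    refine Antitone.measurable ?_
    intro s t hst
    exact measure_mono fun a (ha : t < f a) => lt_of_le_of_lt hst ha
  rw [← lintegral_add_left (anti f), ← lintegral_const_mul _ (anti k)]
  refine setLIntegral_mono' measurableSet_Ioi ?_
  intro s hs
  rcases lt_or_ge s 1 with h1 | h1
  · refine pl_bm1 (measurableSet_lt measurable_const hf) (measurableSet_lt measurable_const hg)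
      (hfs s h1) (hgs s h1) ?_
    intro a ha b hb
    have := h a b
    simp only [mem_ofPred_eq, mem_Ioi] at *
    by_contra hc
    push Not at hc
    nlinarith [hk0 ((a + b) / 2)]
  · have e1 : {a | s < f a} = ∅ := by
      ext a; simpa using (hf1 a).trans h1
    have e2 : {a | s < g a} = ∅ := by
      ext a; simpa using (hg1 a).trans h1
    simp [e1, e2]

lemma pl_amgm (x y : ENNReal) : 4 * (x * y) ≤ (x + y) ^ 2 := by
  wlog hxy : x ≤ y generalizing x y
  · have := this y x (le_of_not_ge hxy)
    rwa [mul_comm x y, add_comm x y]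
  obtain ⟨z, rfl⟩ := exists_add_of_le hxy
  calc 4 * (x * (x + z)) ≤ 4 * (x * (x + z)) + z ^ 2 := le_self_add
    _ = _ := by ring

open scoped ENNReal in
lemma pl_bdd {f g k : ℝ → ℝ≥0∞} (hf : Measurable f) (hg : Measurable g) (hk : Measurable k)
    (hfb : (⨆ x, f x) ≠ ∞) (hgb : (⨆ x, g x) ≠ ∞)
    (h : ∀ x y, f x * g y ≤ k ((x + y) / 2) ^ 2) :
    (∫⁻ x, f x) * (∫⁻ x, g x) ≤ (∫⁻ x, k x) ^ 2 := by
  set a := ⨆ x, f x with ha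
  set b := ⨆ x, g x with hb
  have hfa : ∀ x, f x ≤ a := fun x => le_iSup f x
  have hgb' : ∀ x, g x ≤ b := fun x => le_iSup g x
  rcases eq_or_ne a 0 with h0 | h0
  · have : ∀ x, f x = 0 := fun x => le_antisymm (h0 ▸ hfa x) (zero_le)
    simp [this]
  rcases eq_or_ne b 0 with h0' | h0'
  · have : ∀ x, g x = 0 := fun x => le_antisymm (h0' ▸ hgb' x) (zero_le)
    simp [this]
  obtain ⟨c, hc⟩ : ∃ c : ℝ≥0∞, c ^ 2 = a * b := by
    refine ⟨(a * b) ^ (1 / 2 : ℝ), ?_⟩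
    rw [← ENNReal.rpow_natCast, ← ENNReal.rpow_mul]; norm_num
  have hab : a * b ≠ ∞ := ENNReal.mul_ne_top hfb hgb
  have hab0 : a * b ≠ 0 := mul_ne_zero h0 h0'
  have hc0 : c ≠ 0 := by rintro rfl; simp at hc; tauto
  have hct : c ≠ ∞ := by rintro rfl; simp at hc; exact hab hc.symm
  have aux : ∀ (f : ℝ → ℝ≥0∞) (a : ℝ≥0∞), a ≠ 0 → a ≠ ∞ → (∀ x, f x ≤ a) → ∀ x, f x / a ≤ 1 := by
    intro f a h0 ht hf x
    exact ENNReal.div_le_of_le_mul (by simpa using hf x)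
  have main := pl_core (f := fun x => (f x / a).toReal) (g := fun x => (g x / b).toReal)
    (k := fun x => (min (k x / c) 1).toReal) (by fun_prop) (by fun_prop) (by fun_prop)
    (fun _ => ENNReal.toReal_nonneg) (fun _ => ENNReal.toReal_nonneg)
    (fun _ => ENNReal.toReal_nonneg)
    (fun x => ENNReal.toReal_le_of_le_ofReal zero_le_one (by simpa using aux f a h0 hfb hfa x))
    (fun x => ENNReal.toReal_le_of_le_ofReal zero_le_one (by simpa using aux g b h0' hgb hgb' x))
    ?_ ?_ ?_
  rotate_left
  · intro s hs
    rcases lt_or_ge s 0 with hs0 | hs0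
    · exact ⟨0, hs0.trans_le ENNReal.toReal_nonneg⟩
    have : ENNReal.ofReal s * a < a := by
      conv_rhs => rw [← one_mul a]
      rw [ENNReal.mul_lt_mul_iff_left h0 hfb]
      simpa using hs
    obtain ⟨x, hx⟩ := lt_iSup_iff.1 this
    refine ⟨x, ?_⟩
    rw [← ENNReal.ofReal_lt_iff_lt_toReal hs0 (ne_top_of_le_ne_top ENNReal.one_ne_top (aux f a h0 hfb hfa x))]
    rwa [ENNReal.lt_div_iff_mul_lt (.inl h0) (.inl hfb)]
  · intro s hs
    rcases lt_or_ge s 0 with hs0 | hs0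
    · exact ⟨0, hs0.trans_le ENNReal.toReal_nonneg⟩
    have : ENNReal.ofReal s * b < b := by
      conv_rhs => rw [← one_mul b]
      rw [ENNReal.mul_lt_mul_iff_left h0' hgb]
      simpa using hs
    obtain ⟨x, hx⟩ := lt_iSup_iff.1 this
    refine ⟨x, ?_⟩
    rw [← ENNReal.ofReal_lt_iff_lt_toReal hs0 (ne_top_of_le_ne_top ENNReal.one_ne_top (aux g b h0' hgb hgb' x))]
    rwa [ENNReal.lt_div_iff_mul_lt (.inl h0') (.inl hgb)]
  · intro x y
    rw [← ENNReal.toReal_mul, ← ENNReal.toReal_pow]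
    refine ENNReal.toReal_mono (by simp) ?_
    have h1 := mul_le_mul' (aux f a h0 hfb hfa x) (aux g b h0' hgb hgb' y)
    rcases le_total (k ((x + y) / 2) / c) 1 with h2 | h2
    · rw [min_eq_left h2, div_eq_mul_inv, div_eq_mul_inv, div_eq_mul_inv, mul_pow, ← ENNReal.inv_pow, hc,
        ENNReal.mul_inv (.inl h0) (.inl hfb)]
      calc _ = f x * g y * (a⁻¹ * b⁻¹) := by ring
        _ ≤ _ := by gcongr; exact h x y
    · rw [min_eq_right h2]; simpa using h1
  have e1 : ∀ x, ENNReal.ofReal ((f x / a).toReal) = f x / a := fun x =>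
    ENNReal.ofReal_toReal (ne_top_of_le_ne_top ENNReal.one_ne_top (aux f a h0 hfb hfa x))
  have e2 : ∀ x, ENNReal.ofReal ((g x / b).toReal) = g x / b := fun x =>
    ENNReal.ofReal_toReal (ne_top_of_le_ne_top ENNReal.one_ne_top (aux g b h0' hgb hgb' x))
  have e3 : ∀ x, ENNReal.ofReal ((min (k x / c) 1).toReal) ≤ k x / c := fun x =>
    ENNReal.ofReal_toReal_le.trans (min_le_left _ _)
  simp only [e1, e2] at main
  have main2 : (∫⁻ x, f x) / a + (∫⁻ x, g x) / b ≤ 2 * ((∫⁻ x, k x) / c) := by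
    simp only [div_eq_mul_inv] at *
    rw [← lintegral_mul_const _ hf, ← lintegral_mul_const _ hg, ← lintegral_mul_const _ hk]
    exact main.trans (by gcongr; exact e3 _)
  set F := ∫⁻ x, f x
  set G := ∫⁻ x, g x
  set Q := ∫⁻ x, k x
  have h4 : 4 * (F / a * (G / b)) ≤ 4 * (Q / c) ^ 2 := by
    refine (pl_amgm _ _).trans ?_
    calc _ ≤ (2 * (Q / c)) ^ 2 := by gcongr
      _ = _ := by ring
  rw [ENNReal.mul_le_mul_iff_right (by norm_num) (by norm_num)] at h4
  have : F * G = (F / a * (G / b)) * (a * b) := by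
    calc F * G = (F / a * a) * (G / b * b) := by
          rw [ENNReal.div_mul_cancel h0 hfb, ENNReal.div_mul_cancel h0' hgb]
      _ = _ := by ring
  rw [this, ← hc]
  calc _ ≤ (Q / c) ^ 2 * c ^ 2 := by gcongr
    _ = (Q / c * c) ^ 2 := by ring
    _ = Q ^ 2 := by rw [ENNReal.div_mul_cancel hc0 hct]

open scoped ENNReal in
lemma pl_one {f g k : ℝ → ℝ≥0∞} (hf : Measurable f) (hg : Measurable g) (hk : Measurable k)
    (h : ∀ x y, f x * g y ≤ k ((x + y) / 2) ^ 2) :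
    (∫⁻ x, f x) * (∫⁻ x, g x) ≤ (∫⁻ x, k x) ^ 2 := by
  have trunc : ∀ f : ℝ → ℝ≥0∞, Measurable f →
      ∫⁻ x, f x = ⨆ m : ℕ, ∫⁻ x, min (f x) (m : ℝ≥0∞) := by
    intro f hf
    rw [← lintegral_iSup (fun m => by fun_prop)]
    · congr 1; ext x
      rw [← inf_iSup_eq]
      simp [ENNReal.iSup_natCast]
    · intro i j hij x
      exact min_le_min le_rfl (by exact_mod_cast hij)
  rw [trunc f hf, trunc g hg, ENNReal.iSup_mul]
  refine iSup_le fun i => ?_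
  rw [ENNReal.mul_iSup]
  refine iSup_le fun j => ?_
  refine pl_bdd (by fun_prop) (by fun_prop) hk ?_ ?_ ?_
  · exact ne_top_of_le_ne_top (ENNReal.natCast_ne_top i) (iSup_le fun x => min_le_right _ _)
  · exact ne_top_of_le_ne_top (ENNReal.natCast_ne_top j) (iSup_le fun x => min_le_right _ _)
  · intro x y
    exact (mul_le_mul' (min_le_left _ _) (min_le_left _ _)).trans (h x y)

open scoped ENNReal in
lemma pl_fin (N : ℕ) : ∀ {f g k : (Fin N → ℝ) → ℝ≥0∞}, Measurable f → Measurable g → Measurable k →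
    (∀ x y, f x * g y ≤ k (fun i => (x i + y i) / 2) ^ 2) →
    (∫⁻ x, f x) * (∫⁻ x, g x) ≤ (∫⁻ x, k x) ^ 2 := by
  induction N with
  | zero =>
    intro f g k hf hg hk h
    have : (volume : Measure (Fin 0 → ℝ)) Set.univ = 1 := by
      rw [volume_pi, Measure.pi_univ]; simp
    have e : ∀ f : (Fin 0 → ℝ) → ℝ≥0∞, ∫⁻ x, f x = f default := by
      intro f
      rw [lintegral_unique, this, mul_one]
      congr 1
      exact Subsingleton.elim _ _
    rw [e, e, e]
    convert h default default
  | succ N ih =>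
    intro f g k hf hg hk h
    have mp := volume_preserving_piFinSuccAbove (fun _ : Fin (N+1) => ℝ) 0
    have conv : ∀ f : (Fin (N+1) → ℝ) → ℝ≥0∞, Measurable f →
        ∫⁻ x, f x = ∫⁻ a : ℝ, ∫⁻ z : Fin N → ℝ, f (Fin.cons a z) := by
      intro f hf
      rw [← mp.symm.lintegral_comp hf, Measure.volume_eq_prod, lintegral_prod]
      · simp [MeasurableEquiv.piFinSuccAbove]; rfl
      · exact (hf.comp (MeasurableEquiv.measurable _)).aemeasurable
    have mc : Measurable (fun p : ℝ × (Fin N → ℝ) => (Fin.cons p.1 p.2 : Fin (N+1) → ℝ)) := by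
      rw [measurable_pi_iff]
      intro i
      refine Fin.cases ?_ (fun j => ?_) i
      · simpa using measurable_fst
      · simp only [Fin.cons_succ]; fun_prop
    rw [conv f hf, conv g hg, conv k hk]
    refine pl_one (hf.comp mc).lintegral_prod_right' (hg.comp mc).lintegral_prod_right'
      (hk.comp mc).lintegral_prod_right' ?_
    intro a b
    refine ih (by exact hf.comp (mc.comp measurable_prodMk_left))
      (by exact hg.comp (mc.comp measurable_prodMk_left))
      (by exact hk.comp (mc.comp measurable_prodMk_left)) ?_
    intro x y
    convert h (Fin.cons a x) (Fin.cons b y) using 3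
    ext i
    refine Fin.cases ?_ (fun j => ?_) i <;> simp

/-- multiplicative Brunn-Minkowski (midpoint version) -/
lemma bm_mid (n : ℕ) {A B C : Set (Euc n)} (hA : MeasurableSet A) (hB : MeasurableSet B)
    (hC : MeasurableSet C) (h : ∀ a ∈ A, ∀ b ∈ B, (2⁻¹ : ℝ) • (a + b) ∈ C) :
    volume A * volume B ≤ volume C ^ 2 := by
  have mp := PiLp.volume_preserving_toLp (Fin (n+1))
  have cv : ∀ S : Set (Euc n), MeasurableSet S →
      volume S = ∫⁻ z : Fin (n+1) → ℝ, S.indicator 1 (WithLp.toLp 2 z : Euc n) := by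
    intro S hS
    rw [← lintegral_indicator_one hS]
    exact (mp.lintegral_comp (measurable_one.indicator hS)).symm
  rw [cv A hA, cv B hB, cv C hC]
  refine pl_fin (n+1) ((measurable_one.indicator hA).comp mp.measurable)
    ((measurable_one.indicator hB).comp mp.measurable)
    ((measurable_one.indicator hC).comp mp.measurable) ?_
  intro x y
  by_cases hx : (WithLp.toLp 2 x : Euc n) ∈ A
  · by_cases hy : (WithLp.toLp 2 y : Euc n) ∈ B
    · have := h _ hx _ hy
      have e : (WithLp.toLp 2 (fun i => (x i + y i) / 2) : Euc n)
          = (2⁻¹ : ℝ) • (WithLp.toLp 2 x + WithLp.toLp 2 y) := by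
        ext i; simp; ring
      rw [e]
      rw [Set.indicator_of_mem hx, Set.indicator_of_mem hy, Set.indicator_of_mem this]
      simp
    · simp [hy]
  · simp [hx]


instance sphMeasure_fin (n : ℕ) : IsFiniteMeasure (sphMeasure n) := by
  unfold sphMeasure; infer_instance

instance sphMeasure_pos (n : ℕ) : (sphMeasure n).IsOpenPosMeasure := by
  unfold sphMeasure; infer_instance

lemma sph_norm {n : ℕ} (x : sphere (0 : Euc n) 1) : ‖(x : Euc n)‖ = 1 := by simp

lemma sph_ne {n : ℕ} (x : sphere (0 : Euc n) 1) : (x : Euc n) ≠ 0 := by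
  intro h; have := sph_norm x; rw [h] at this; simp at this

open scoped ENNReal in
lemma polar_lint0 (n : ℕ) (g : Euc n → ℝ≥0∞) :
    ∫⁻ y, g y = ∫⁻ p : sphere (0 : Euc n) 1 × Set.Ioi (0:ℝ), g ((p.2 : ℝ) • (p.1 : Euc n))
      ∂((sphMeasure n).prod (Measure.volumeIoiPow n)) := by
  have mp := (volume : Measure (Euc n)).measurePreserving_homeomorphUnitSphereProd
  have hd : Module.finrank ℝ (Euc n) - 1 = n := by simp
  rw [hd] at mp
  have h2 := mp.lintegral_comp_emb (Homeomorph.measurableEmbedding _)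
    (fun p => g ((p.2 : ℝ) • (p.1 : Euc n)))
  unfold sphMeasure
  rw [← h2]
  have h3 := lintegral_subtype_comap (μ := (volume : Measure (Euc n))) (measurableSet_singleton (0 : Euc n)).compl g
  rw [restrict_compl_singleton] at h3
  rw [← h3]
  congr 1
  ext y
  have hy : (y : Euc n) ≠ 0 := y.2
  simp [smul_smul, hy]

open scoped ENNReal in
lemma polar_lint (n : ℕ) (ρ : Euc n → ℝ) (c : Euc n → ℝ≥0∞) 
    (hρ : ∀ s : ℝ, 0 < s → ∀ x, x ≠ 0 → ρ (s • x) = ρ x)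
    (hc : ∀ s : ℝ, 0 < s → ∀ x, x ≠ 0 → c (s • x) = c x)
    (hρ0 : ∀ x : sphere (0 : Euc n) 1, 0 < ρ x)
    (mρ : Measurable (fun x : sphere (0 : Euc n) 1 => ρ x))
    (mc : Measurable (fun x : sphere (0 : Euc n) 1 => c x))
    (mE : MeasurableSet {y : Euc n | y ≠ 0 ∧ ‖y‖ < ρ y}) :
    ∫⁻ y in {y : Euc n | y ≠ 0 ∧ ‖y‖ < ρ y}, c y =
      ∫⁻ x : sphere (0 : Euc n) 1, c x * ENNReal.ofReal (ρ x ^ (n+1) / (n+1)) ∂(sphMeasure n) := by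
  rw [← lintegral_indicator mE, polar_lint0]
  have e : ∀ p : sphere (0 : Euc n) 1 × Set.Ioi (0:ℝ),
      ({y : Euc n | y ≠ 0 ∧ ‖y‖ < ρ y}.indicator c) ((p.2 : ℝ) • (p.1 : Euc n))
       = c p.1 * {p : sphere (0 : Euc n) 1 × Set.Ioi (0:ℝ) | (p.2 : ℝ) < ρ p.1}.indicator 1 p := by
    rintro ⟨x, s, hs⟩
    have hs' : 0 < s := hs
    simp only [Set.indicator_apply, Set.mem_ofPred_eq]
    simp [hρ s hs' x (sph_ne x), hc s hs' x (sph_ne x), norm_smul, sph_ne x, hs'.ne', abs_of_pos hs']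
  simp only [e]
  have mS : MeasurableSet {p : sphere (0 : Euc n) 1 × Set.Ioi (0:ℝ) | (p.2 : ℝ) < ρ p.1} :=
    measurableSet_lt (by fun_prop) (mρ.comp measurable_fst)
  rw [lintegral_prod (fun p : sphere (0 : Euc n) 1 × Set.Ioi (0:ℝ) => c p.1 * {p : sphere (0 : Euc n) 1 × Set.Ioi (0:ℝ) | (p.2 : ℝ) < ρ p.1}.indicator 1 p) ((mc.comp measurable_fst).mul (measurable_one.indicator mS)).aemeasurable]
  congr 1
  ext x
  simp only
  rw [lintegral_const_mul]
  · congr 1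
    have := Measure.volumeIoiPow_apply_Iio n ⟨ρ x, hρ0 x⟩
    rw [← this, ← lintegral_indicator_one measurableSet_Iio]
    congr 1
  · exact (measurable_one.indicator mS).comp measurable_prodMk_left

lemma polar_int (n : ℕ) (φ : ℝ → ℝ) (b : Euc n → ℝ)
    (hb : ∀ s : ℝ, 0 < s → ∀ x, x ≠ 0 → b (s • x) = b x) :
    ∫ y : Euc n, φ ‖y‖ * b y = (∫ s in Set.Ioi (0:ℝ), s ^ n * φ s) *
      ∫ x : sphere (0 : Euc n) 1, b x ∂(sphMeasure n) := by
  have mp := (volume : Measure (Euc n)).measurePreserving_homeomorphUnitSphereProd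
  have hd : Module.finrank ℝ (Euc n) - 1 = n := by simp
  rw [hd] at mp
  have h2 := mp.integral_comp (Homeomorph.measurableEmbedding _)
    (fun p => b (p.1 : Euc n) * φ (p.2 : ℝ))
  rw [integral_prod_mul (f := fun x : sphere (0 : Euc n) 1 => b x) (g := fun s : Set.Ioi (0:ℝ) => φ s)] at h2
  have h3 := integral_subtype_comap (μ := (volume : Measure (Euc n))) (measurableSet_singleton (0 : Euc n)).compl (fun y => φ ‖y‖ * b y)
  rw [restrict_compl_singleton] at h3
  have e4 : ∫ s : Set.Ioi (0:ℝ), φ s ∂(Measure.volumeIoiPow n) = ∫ s in Set.Ioi (0:ℝ), s ^ n * φ s := by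
    simp only [Measure.volumeIoiPow, ENNReal.ofReal]
    rw [integral_withDensity_eq_integral_smul,
        integral_subtype_comap measurableSet_Ioi fun a ↦ Real.toNNReal (a ^ n) • φ a,
        setIntegral_congr_fun measurableSet_Ioi fun x hx ↦ ?_]
    · rw [NNReal.smul_def, Real.coe_toNNReal _ (pow_nonneg hx.out.le _), smul_eq_mul]
    · exact (measurable_subtype_coe.pow_const _).real_toNNReal
  rw [← h3, ← e4, mul_comm, sphMeasure, ← h2]
  congr 1
  ext y
  have hy : (y : Euc n) ≠ 0 := y.2
  have hy' : 0 < ‖(y : Euc n)‖ := norm_pos_iff.2 hy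
  have := hb ‖(y : Euc n)‖⁻¹ (by positivity) y hy
  simp [this, mul_comm]

lemma norm_hasFDerivAt {n : ℕ} {y : Euc n} (hy : y ≠ 0) :
    HasFDerivAt (fun y : Euc n => ‖y‖) (‖y‖⁻¹ • innerSL ℝ y) y := by
  have hy' : ‖y‖ ≠ 0 := norm_ne_zero_iff.2 hy
  have := ((hasStrictFDerivAt_norm_sq y).hasFDerivAt.sqrt (by positivity))
  simp only [Real.sqrt_sq (norm_nonneg _)] at this
  refine this.congr_fderiv ?_
  rw [← Nat.cast_smul_eq_nsmul ℝ, smul_smul]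
  congr 1
  field_simp
  norm_num

/-- Divergence identity for functions of degree `-n`. -/
lemma sph_div0 (n : ℕ) (G : Euc n → ℝ) (i : Fin (n+1)) (hG : ContDiffOn ℝ 1 G {(0 : Euc n)}ᶜ)
    (hG0 : ∀ s : ℝ, 0 < s → ∀ x, x ≠ 0 → s ^ n * G (s • x) = G x)
    (hG1 : ∀ s : ℝ, 0 < s → ∀ x, x ≠ 0 → s ^ (n + 1) * fderiv ℝ G (s • x) (EuclideanSpace.single i 1)
        = fderiv ℝ G x (EuclideanSpace.single i 1)) :
    ∫ x : sphere (0 : Euc n) 1, fderiv ℝ G x (EuclideanSpace.single i 1) ∂(sphMeasure n) = 0 := by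
  let φ : ContDiffBump (2:ℝ) := ⟨1/2, 1, by norm_num, by norm_num⟩
  set e : Euc n := EuclideanSpace.single i 1 with he
  have hφ0 : ∀ s, s ≤ 1 → φ s = 0 := by
    intro s hs
    refine φ.zero_of_le_dist ?_
    change 1 ≤ _
    rw [Real.dist_eq, abs_sub_comm, abs_of_nonneg] <;> linarith
  have hφ3 : ∀ s, 3 ≤ s → φ s = 0 := by
    intro s hs
    refine φ.zero_of_le_dist ?_
    change 1 ≤ _
    rw [Real.dist_eq, abs_of_nonneg] <;> linarith
  have hφd : ∀ s, HasDerivAt φ (deriv φ s) s := fun s =>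
    ((φ.contDiff (n := 1)).differentiable (by norm_num)).differentiableAt.hasDerivAt
  set P : Euc n → ℝ := fun y => φ ‖y‖ * G y with hP
  have opn : IsOpen ({(0 : Euc n)}ᶜ) := isOpen_compl_singleton
  have hPs : ContDiff ℝ 1 P := by
    rw [contDiff_iff_contDiffAt]
    intro y
    by_cases hy : y = 0
    · refine (contDiffAt_const (c := (0:ℝ))).congr_of_eventuallyEq ?_
      have : ball (0 : Euc n) 1 ∈ nhds y := by rw [hy]; exact ball_mem_nhds _ one_pos
      filter_upwards [this] with z hz
      rw [mem_ball_zero_iff] at hz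
      simp [hP, hφ0 _ hz.le]
    · exact (φ.contDiff.contDiffAt.comp y (contDiffAt_norm ℝ hy)).mul
        (hG.contDiffAt (opn.mem_nhds hy))
  have hPc : HasCompactSupport P := by
    refine HasCompactSupport.of_support_subset_isCompact (isCompact_closedBall (0 : Euc n) 3) ?_
    intro y hy
    by_contra hc
    simp only [mem_closedBall_zero_iff, not_le] at hc
    exact hy (by simp [hP, hφ3 _ hc.le])
  have hint : ∫ y, fderiv ℝ P y e = 0 := by
    have := integral_mul_fderiv_eq_neg_fderiv_mul_of_integrable (𝕜 := ℝ) (μ := (volume : Measure (Euc n)))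
      (f := fun _ => (1:ℝ)) (g := P) (v := e) (by simp) ?_ ?_ (by fun_prop) 
      (fun x _ => (hPs.differentiable (by norm_num)) x)
    · simpa using this
    · simp only [one_mul]
      exact ((hPs.continuous_fderiv (by norm_num)).clm_apply continuous_const).integrable_of_hasCompactSupport
        (hPc.fderiv_apply (𝕜 := ℝ) e)
    · simp only [one_mul]
      exact hPs.continuous.integrable_of_hasCompactSupport hPc
  have hder : ∀ y : Euc n, y ≠ 0 → fderiv ℝ P y e =
      (deriv φ ‖y‖ * ((‖y‖)^n)⁻¹) * (‖y‖^n * G y * (⟪‖y‖⁻¹ • y, e⟫)) + (φ ‖y‖ * (‖y‖^(n+1))⁻¹) * (‖y‖^(n+1) * fderiv ℝ G y e) := by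
    intro y hy
    have hy' : ‖y‖ ≠ 0 := norm_ne_zero_iff.2 hy
    have h1 := norm_hasFDerivAt hy
    have h2 := (hφd ‖y‖).comp_hasFDerivAt y h1
    have h3 := ((hG.contDiffAt (opn.mem_nhds hy)).differentiableAt (by norm_num)).hasFDerivAt
    have h4 := (h2.mul h3).fderiv
    have : fderiv ℝ P y = _ := h4
    rw [this]
    simp [inner_smul_left]
    field_simp
    ring
  have hnt : ∀ᵐ y : Euc n, y ≠ 0 := by
    rw [ae_iff]; simp
  have hGc : ContinuousOn (fun y => fderiv ℝ G y e) ({(0 : Euc n)}ᶜ) :=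
    (hG.continuousOn_fderiv_of_isOpen opn (by norm_num)).clm_apply continuousOn_const
  have hQc : Continuous (fun y => φ ‖y‖ * fderiv ℝ G y e) := by
    rw [continuous_iff_continuousAt]
    intro y
    by_cases hy : y = 0
    · refine (continuousAt_const (y := (0:ℝ))).congr ?_
      have : ball (0 : Euc n) 1 ∈ nhds y := by rw [hy]; exact ball_mem_nhds _ one_pos
      filter_upwards [this] with z hz
      rw [mem_ball_zero_iff] at hz
      simp [hφ0 _ hz.le]
    · exact (φ.continuous.comp continuous_norm).continuousAt.mul (hGc.continuousAt (opn.mem_nhds hy))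
  have hQi : Integrable (fun y => φ ‖y‖ * fderiv ℝ G y e) := by
    refine hQc.integrable_of_hasCompactSupport ?_
    refine HasCompactSupport.of_support_subset_isCompact (isCompact_closedBall (0 : Euc n) 3) ?_
    intro y hy
    by_contra hc
    simp only [mem_closedBall_zero_iff, not_le] at hc
    exact hy (by simp [hφ3 _ hc.le])
  have hPi : Integrable (fun y => fderiv ℝ P y e) :=
    ((hPs.continuous_fderiv (by norm_num)).clm_apply continuous_const).integrable_of_hasCompactSupport
        (hPc.fderiv_apply (𝕜 := ℝ) e)
  have hsub := integral_sub hPi hQi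
  rw [hint, zero_sub] at hsub
  have hA : ∫ y, (fderiv ℝ P y e - φ ‖y‖ * fderiv ℝ G y e) =
      ∫ y, (deriv φ ‖y‖ * ((‖y‖)^n)⁻¹) * (‖y‖^n * G y * (⟪‖y‖⁻¹ • y, e⟫)) := by
    refine integral_congr_ae ?_
    filter_upwards [hnt] with y hy
    have hy' : ‖y‖ ≠ 0 := norm_ne_zero_iff.2 hy
    rw [hder y hy]
    field_simp
    ring
  have hB : ∫ y, φ ‖y‖ * fderiv ℝ G y e =
      ∫ y, (φ ‖y‖ * (‖y‖^(n+1))⁻¹) * (‖y‖^(n+1) * fderiv ℝ G y e) := by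
    refine integral_congr_ae ?_
    filter_upwards [hnt] with y hy
    have hy' : ‖y‖ ≠ 0 := norm_ne_zero_iff.2 hy
    field_simp
  rw [hA, hB, polar_int n (fun s => deriv φ s * (s^n)⁻¹) (fun y => (‖y‖^n * G y * (⟪‖y‖⁻¹ • y, e⟫))),
    polar_int n (fun s => φ s * (s^(n+1))⁻¹) (fun y => ‖y‖^(n+1) * fderiv ℝ G y e)] at hsub
  · have z1 : ∫ s in Set.Ioi (0:ℝ), s ^ n * (deriv φ s * (s^n)⁻¹) = 0 := by
      have : ∫ s in Set.Ioi (0:ℝ), s ^ n * (deriv φ s * (s^n)⁻¹) = ∫ s in Set.Ioi (0:ℝ), deriv φ s := by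
        refine setIntegral_congr_fun measurableSet_Ioi ?_
        intro s hs
        have hs' : s ≠ 0 := (show 0 < s from hs).ne'
        simp only
        field_simp
      rw [this, HasCompactSupport.integral_Ioi_deriv_eq φ.contDiff φ.hasCompactSupport, hφ0 0 zero_le_one]
      simp
    have z2 : 0 < ∫ s in Set.Ioi (0:ℝ), s ^ n * (φ s * (s^(n+1))⁻¹) := by
      have e1 : ∫ s in Set.Ioi (0:ℝ), s ^ n * (φ s * (s^(n+1))⁻¹) = ∫ s in Set.Ioi (0:ℝ), φ s * (max s 1)⁻¹ := by
        refine setIntegral_congr_fun measurableSet_Ioi ?_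
        intro s hs
        have hs' : s ≠ 0 := (show 0 < s from hs).ne'
        simp only
        rcases le_total s 1 with h1 | h1
        · simp [hφ0 s h1]
        · rw [max_eq_left h1, pow_succ]
          field_simp
      rw [e1]
      have e2 : ∫ s in Set.Ioi (0:ℝ), φ s * (max s 1)⁻¹ = ∫ s, φ s * (max s 1)⁻¹ := by
        refine setIntegral_eq_integral_of_forall_compl_eq_zero ?_
        intro s hs
        simp only [Set.mem_Ioi, not_lt] at hs
        simp [hφ0 s (by linarith)]
      rw [e2]
      have cont : Continuous (fun s : ℝ => φ s * (max s 1)⁻¹) :=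
        φ.continuous.mul ((continuous_id.max continuous_const).inv₀
          (fun s => (lt_of_lt_of_le one_pos (le_max_right s 1)).ne'))
      refine cont.integral_pos_of_hasCompactSupport_nonneg_nonzero (x := 2) ?_ ?_ ?_
      · exact φ.hasCompactSupport.mul_right
      · intro s
        exact mul_nonneg φ.nonneg (inv_nonneg.2 (zero_le_one.trans (le_max_right s 1)))
      · have : φ 2 = 1 := φ.one_of_mem_closedBall (by simp [φ.rIn_pos.le])
        simp [this]
    rw [z1, zero_mul, zero_eq_neg, mul_eq_zero] at hsub
    rcases hsub with h | h
    · exact absurd h z2.ne'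
    · simpa using h
  · intro s hs x hx
    have h1 := hG1 s hs x hx
    rw [norm_smul, Real.norm_of_nonneg hs.le, mul_pow, ← h1]; ring
  · intro s hs x hx
    have h1 := hG0 s hs x hx
    have hx' : ‖x‖ ≠ 0 := norm_ne_zero_iff.2 hx
    rw [norm_smul, Real.norm_of_nonneg hs.le, mul_pow, ← h1, smul_smul]
    have : (s * ‖x‖)⁻¹ * s = ‖x‖⁻¹ := by field_simp
    rw [this]; ring


lemma ne_nhds {n : ℕ} {x : Euc n} (hx : x ≠ 0) : ({(0 : Euc n)}ᶜ : Set (Euc n)) ∈ nhds x :=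
  isOpen_compl_singleton.mem_nhds hx

lemma fderiv_homog {n : ℕ} {F' : Type*} [NormedAddCommGroup F'] [NormedSpace ℝ F'] (F : Euc n → F') (s c : ℝ) (hs : 0 < s)
    (h : ∀ x, x ≠ 0 → F (s • x) = c • F x) (x : Euc n) (hx : x ≠ 0) :
    s • fderiv ℝ F (s • x) = c • fderiv ℝ F x := by
  have h1 : (fun y => F (s • y)) =ᶠ[nhds x] (fun y => c • F y) := by
    filter_upwards [ne_nhds hx] with y hy using h y hy
  have h2 := h1.fderiv_eq (𝕜 := ℝ)
  rw [fderiv_comp_smul] at h2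
  rw [h2]
  exact congrFun (fderiv_const_smul_field (𝕜 := ℝ) (f := F) c) x

lemma two_le_top : (2 : WithTop ℕ∞) ≤ ((⊤ : ℕ∞) : WithTop ℕ∞) := by
  exact WithTop.coe_le_coe.2 (show (2:ℕ∞) ≤ ⊤ from le_top)

structure Hom1 (n : ℕ) (u : Euc n → ℝ) : Prop where
  hom : ∀ c : ℝ, 0 < c → ∀ x : Euc n, u (c • x) = c * u x
  sm : ContDiffOn ℝ (⊤ : ℕ∞) u {(0 : Euc n)}ᶜ

def Sm (n : ℕ) {F' : Type*} [NormedAddCommGroup F'] [NormedSpace ℝ F'] (f : Euc n → F') : Prop :=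
  ContDiffOn ℝ (⊤ : ℕ∞) f {(0 : Euc n)}ᶜ

section sm
variable {n : ℕ} {F' : Type*} [NormedAddCommGroup F'] [NormedSpace ℝ F'] {f : Euc n → F'}

lemma Sm.cd (h : Sm n f) {x : Euc n} (hx : x ≠ 0) : ContDiffAt ℝ (⊤ : ℕ∞) f x :=
  ContDiffOn.contDiffAt h (ne_nhds hx)

lemma Sm.diff (h : Sm n f) {x : Euc n} (hx : x ≠ 0) : DifferentiableAt ℝ f x :=
  (h.cd hx).differentiableAt (by simp)

lemma Sm.cont (h : Sm n f) {x : Euc n} (hx : x ≠ 0) : ContinuousAt f x :=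
  (h.cd hx).continuousAt

lemma Sm.fder (h : Sm n f) : Sm n (fderiv ℝ f) :=
  ContDiffOn.fderiv_of_isOpen h isOpen_compl_singleton (by simp)

lemma Sm.con1 (h : Sm n f) : ContDiffOn ℝ 1 f {(0 : Euc n)}ᶜ :=
  ContDiffOn.of_le h (by exact_mod_cast le_top)

lemma Sm.sph (h : Sm n f) : Continuous (fun x : sphere (0 : Euc n) 1 => f x) :=
  ContinuousOn.comp_continuous h.continuousOn continuous_subtype_val (fun x => sph_ne x)

lemma Sm.grad {u : Euc n → ℝ} (h : Sm n u) : Sm n (gradient u) := by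
  have : gradient u = fun x => (InnerProductSpace.toDual ℝ (Euc n)).symm (fderiv ℝ u x) := rfl
  rw [this]
  exact ((InnerProductSpace.toDual ℝ (Euc n)).symm.toContinuousLinearEquiv.contDiff).comp_contDiffOn h.fder
end sm

lemma grad_inner {n : ℕ} (u : Euc n → ℝ) (x v : Euc n) : ⟪gradient u x, v⟫ = fderiv ℝ u x v := by
  simp [gradient]

/-- Euler relation. -/
lemma euler {n : ℕ} (F : Euc n → ℝ) (d : ℝ) (x : Euc n) (hF : DifferentiableAt ℝ F x)
    (h : ∀ s, 0 < s → F (s • x) = s ^ d * F x) : fderiv ℝ F x x = d * F x := by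
  have h1 : HasDerivAt (fun s : ℝ => F (s • x)) (fderiv ℝ F x x) 1 := by
    have h2 : HasDerivAt (fun s : ℝ => s • x) x 1 := by
      simpa using (hasDerivAt_id (1:ℝ)).smul_const x
    have h3 : HasFDerivAt F (fderiv ℝ F x) ((1:ℝ) • x) := by simpa using hF.hasFDerivAt
    exact h3.comp_hasDerivAt 1 h2
  have h2 : HasDerivAt (fun s : ℝ => s ^ d * F x) (d * F x) 1 := by
    have := (Real.hasDerivAt_rpow_const (x := 1) (p := d) (Or.inl one_ne_zero)).mul_const (F x)
    simpa using this
  refine h1.unique (h2.congr_of_eventuallyEq ?_)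
  filter_upwards [lt_mem_nhds (zero_lt_one)] with s hs using h s hs

lemma euler0 {n : ℕ} {F' : Type*} [NormedAddCommGroup F'] [NormedSpace ℝ F'] (F : Euc n → F') (x : Euc n) (hF : DifferentiableAt ℝ F x)
    (h : ∀ s : ℝ, 0 < s → F (s • x) = F x) : fderiv ℝ F x x = 0 := by
  have h1 : HasDerivAt (fun s : ℝ => F (s • x)) (fderiv ℝ F x x) 1 := by
    have h2 : HasDerivAt (fun s : ℝ => s • x) x 1 := by
      simpa using (hasDerivAt_id (1:ℝ)).smul_const x
    have h3 : HasFDerivAt F (fderiv ℝ F x) ((1:ℝ) • x) := by simpa using hF.hasFDerivAt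
    exact h3.comp_hasDerivAt 1 h2
  refine h1.unique ((hasDerivAt_const (1:ℝ) (F x)).congr_of_eventuallyEq ?_)
  filter_upwards [lt_mem_nhds (zero_lt_one)] with s hs using h s hs

lemma sm_norm_rpow (n : ℕ) (e : ℝ) : Sm n (fun y : Euc n => ‖y‖ ^ e) := by
  intro y hy
  refine ContDiffAt.contDiffWithinAt ?_
  exact (contDiffAt_norm ℝ hy).rpow_const_of_ne (by simpa using hy)

lemma cont_coord (n : ℕ) (i : Fin (n+1)) : Continuous (fun x : sphere (0 : Euc n) 1 => (x : Euc n) i) :=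
  (EuclideanSpace.proj (𝕜 := ℝ) i).continuous.comp continuous_subtype_val

lemma sph_div (n : ℕ) (F : Euc n → ℝ) (d : ℝ) (i : Fin (n+1)) (hF : Sm n F)
    (h : ∀ s, 0 < s → ∀ x, x ≠ 0 → F (s • x) = s ^ d * F x) :
    ∫ x : sphere (0 : Euc n) 1, fderiv ℝ F x (EuclideanSpace.single i 1) ∂sphMeasure n
      = (d + n) * ∫ x : sphere (0 : Euc n) 1, F x * (x : Euc n) i ∂sphMeasure n := by
  set G : Euc n → ℝ := fun y => ‖y‖ ^ (-(d+n)) * F y with hG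
  have hGs : Sm n G := ContDiffOn.mul (sm_norm_rpow n _) hF
  have hGh : ∀ s, 0 < s → ∀ x, x ≠ 0 → G (s • x) = s ^ (-(n:ℝ)) * G x := by
    intro s hs x hx
    simp only [hG]
    rw [h s hs x hx, norm_smul, Real.norm_of_nonneg hs.le, Real.mul_rpow hs.le (norm_nonneg _)]
    have : s ^ (-(n:ℝ)) = s ^ (-(d+n)) * s ^ d := by rw [← Real.rpow_add hs]; ring_nf
    rw [this]; ring
  have hz := sph_div0 n G i hGs.con1 (by
      intro s hs x hx
      rw [hGh s hs x hx, Real.rpow_neg hs.le, Real.rpow_natCast]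
      field_simp) (by
      intro s hs x hx
      have := fderiv_homog G s (s ^ (-(n:ℝ))) hs (fun x hx => hGh s hs x hx) x hx
      have h2 := congrArg (fun L => L (EuclideanSpace.single i 1)) this
      simp only [_root_.smul_apply, smul_eq_mul] at h2
      rw [Real.rpow_neg hs.le, Real.rpow_natCast] at h2
      rw [pow_succ, mul_assoc, h2]
      field_simp)
  have hd : ∀ x : sphere (0 : Euc n) 1, fderiv ℝ G x (EuclideanSpace.single i 1)
      = fderiv ℝ F x (EuclideanSpace.single i 1) - (d+n) * (F x * (x : Euc n) i) := by
    intro x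
    have h1 : HasFDerivAt (fun y : Euc n => ‖y‖ ^ (-(d+n))) _ (x : Euc n) :=
      (norm_hasFDerivAt (sph_ne x)).rpow_const (p := -(d+n)) (Or.inl (by simp))
    have h2 := h1.mul (hF.diff (sph_ne x)).hasFDerivAt
    have h3 : fderiv ℝ G x = _ := h2.fderiv
    rw [h3]
    simp [EuclideanSpace.inner_single_right]
    ring
  simp_rw [hd] at hz
  have i1 : Integrable (fun x : sphere (0 : Euc n) 1 => fderiv ℝ F x (EuclideanSpace.single i 1)) (sphMeasure n) := by
    apply Continuous.integrable_of_hasCompactSupport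
    · exact (hF.fder.sph).clm_apply continuous_const
    · exact HasCompactSupport.of_compactSpace _
  have i2 : Integrable (fun x : sphere (0 : Euc n) 1 => (d+n) * (F x * (x : Euc n) i)) (sphMeasure n) := by
    apply Continuous.integrable_of_hasCompactSupport
    · exact continuous_const.mul (hF.sph.mul (cont_coord n i))
    · exact HasCompactSupport.of_compactSpace _
  rw [integral_sub i1 i2, integral_const_mul] at hz
  linarith

section hom
variable {n : ℕ} {u : Euc n → ℝ}

lemma Hom1.s (h : Hom1 n u) : Sm n u := h.sm

def Hs (n : ℕ) (u : Euc n → ℝ) (x : Euc n) : Euc n →L[ℝ] Euc n := fderiv ℝ (gradient u) x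

lemma Hom1.gr (h : Hom1 n u) : Sm n (gradient u) := h.s.grad
lemma Hom1.hs (h : Hom1 n u) : Sm n (Hs n u) := h.gr.fder

lemma Hom1.grad_hom (h : Hom1 n u) {s : ℝ} (hs : 0 < s) {x : Euc n} (hx : x ≠ 0) :
    gradient u (s • x) = gradient u x := by
  have := fderiv_homog u s s hs (fun x _ => h.hom s hs x) x hx
  have h2 : fderiv ℝ u (s • x) = fderiv ℝ u x := smul_right_injective _ hs.ne' this
  simp [gradient, h2]

lemma Hom1.euler (h : Hom1 n u) {x : Euc n} (hx : x ≠ 0) : ⟪gradient u x, x⟫ = u x := by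
  rw [grad_inner]
  have := _root_.euler u 1 x (h.s.diff hx) (fun s hs => by simpa using h.hom s hs x)
  simpa using this

lemma Hom1.hs_self (h : Hom1 n u) {x : Euc n} (hx : x ≠ 0) : Hs n u x x = 0 :=
  euler0 _ x (h.gr.diff hx) (fun s hs => h.grad_hom hs hx)

lemma Hom1.hs_hom (h : Hom1 n u) {s : ℝ} (hs : 0 < s) {x : Euc n} (hx : x ≠ 0) :
    s • Hs n u (s • x) = Hs n u x := by
  have := fderiv_homog (gradient u) s 1 hs (fun x hx => by simpa using h.grad_hom hs hx) x hx
  simpa [Hs] using this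

lemma Sm.hs_inner (h : Sm n u) {x : Euc n} (hx : x ≠ 0) (v w : Euc n) :
    ⟪Hs n u x v, w⟫ = fderiv ℝ (fderiv ℝ u) x v w := by
  have h1 : HasFDerivAt (fderiv ℝ u) (fderiv ℝ (fderiv ℝ u) x) x := (h.fder.diff hx).hasFDerivAt
  have h2 : HasFDerivAt (gradient u) _ x :=
    ((InnerProductSpace.toDual ℝ (Euc n)).symm.toContinuousLinearEquiv.hasFDerivAt).comp x h1
  rw [Hs, h2.fderiv]
  simp

lemma Sm.hs_symm (h : Sm n u) {x : Euc n} (hx : x ≠ 0) (v w : Euc n) :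
    ⟪Hs n u x v, w⟫ = ⟪v, Hs n u x w⟫ := by
  rw [real_inner_comm _ v, h.hs_inner hx, h.hs_inner hx]
  exact (((h.cd hx).of_le two_le_top).isSymmSndFDerivAt (n := 2) (by simp)) v w

lemma Sm.ehess_eq (h : Sm n u) {x : Euc n} (hx : x ≠ 0) (i j : Fin (n+1)) :
    ehess n u x i j = Hs n u x (EuclideanSpace.single i 1) j := by
  have h1 : HasFDerivAt (fderiv ℝ u) (fderiv ℝ (fderiv ℝ u) x) x := (h.fder.diff hx).hasFDerivAt
  have h2 := h1.clm_apply (hasFDerivAt_const (EuclideanSpace.single j (1:ℝ)) x)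
  have h3 := h.hs_inner hx (EuclideanSpace.single i 1) (EuclideanSpace.single j 1)
  rw [EuclideanSpace.inner_single_right] at h3
  simp only [ehess, Matrix.of_apply]
  rw [h2.fderiv]
  simpa using h3.symm

lemma Hs_coord (x v : Euc n) (i : Fin (n+1)) : Hs n u x v i = ∑ j, Hs n u x (EuclideanSpace.single j 1) i * v j := by
  have hv : v = ∑ j, v j • EuclideanSpace.single j (1:ℝ) := by
    ext k; simp [Finset.sum_apply, Pi.single_apply]
  conv_lhs => rw [hv]
  simp [map_sum, mul_comm]

lemma Sm.ehess_symm (h : Sm n u) {x : Euc n} (hx : x ≠ 0) (i j : Fin (n+1)) :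
    ehess n u x i j = ehess n u x j i := by
  have h3 := h.hs_symm hx (EuclideanSpace.single i 1) (EuclideanSpace.single j 1)
  rw [EuclideanSpace.inner_single_right, EuclideanSpace.inner_single_left] at h3
  rw [h.ehess_eq hx, h.ehess_eq hx]
  simpa using h3

lemma Sm.ehess_mulVec (h : Sm n u) {x : Euc n} (hx : x ≠ 0) (v : Euc n) (i : Fin (n+1)) :
    (ehess n u x *ᵥ v) i = Hs n u x v i := by
  rw [Hs_coord, Matrix.mulVec, dotProduct]
  refine Finset.sum_congr rfl fun j _ => ?_
  rw [h.ehess_symm hx, h.ehess_eq hx]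

lemma euc_inner (v w : Euc n) : ⟪v, w⟫ = ∑ i, v i * w i := by
  rw [PiLp.inner_apply]; exact Finset.sum_congr rfl fun i _ => by simp [mul_comm]

lemma Sm.bmat_mulVec (h : Sm n u) {x : Euc n} (hx : x ≠ 0) (v : Euc n) (i : Fin (n+1)) :
    (bmat n u x *ᵥ v) i = (Hs n u x v + (u x * ⟪x, v⟫) • x) i := by
  rw [bmat, Matrix.add_mulVec, Pi.add_apply, h.ehess_mulVec hx]
  simp only [PiLp.add_apply, PiLp.smul_apply, smul_eq_mul, euc_inner, Matrix.mulVec, dotProduct, Matrix.of_apply]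
  congr 1
  rw [Finset.mul_sum, Finset.sum_mul]
  exact Finset.sum_congr rfl fun j _ => by ring

lemma Sm.bmat_quad (h : Sm n u) {x : Euc n} (hx : x ≠ 0) (v : Euc n) :
    (v : Fin (n+1) → ℝ) ⬝ᵥ (bmat n u x *ᵥ v) = ⟪Hs n u x v, v⟫ + u x * ⟪x, v⟫ ^ 2 := by
  have : (v : Fin (n+1) → ℝ) ⬝ᵥ (bmat n u x *ᵥ v) = ⟪v, Hs n u x v + (u x * ⟪x, v⟫) • x⟫ := by
    rw [euc_inner, dotProduct]
    exact Finset.sum_congr rfl fun j _ => by rw [h.bmat_mulVec hx]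
  rw [this, inner_add_right, inner_smul_right, real_inner_comm x v, real_inner_comm (Hs n u x v) v]
  ring

lemma Sm.bmat_symm (h : Sm n u) {x : Euc n} (hx : x ≠ 0) : (bmat n u x).IsHermitian := by
  ext i j
  simp [bmat, h.ehess_symm hx i j, mul_comm]

lemma Sm.bmat_cont (h : Sm n u) (i j : Fin (n+1)) : Continuous fun x : sphere (0 : Euc n) 1 => bmat n u x i j := by
  have h1 := h.grad.fder.sph
  have h2 := h.sph
  have : (fun x : sphere (0 : Euc n) 1 => bmat n u x i j) = fun x : sphere (0 : Euc n) 1 => (fderiv ℝ (gradient u) x (EuclideanSpace.single i 1)) j + u x * ((x : Euc n) i * (x : Euc n) j) := by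
    ext x
    simp [bmat, h.ehess_eq (sph_ne x), Hs]
  rw [this]
  have h3 : Continuous fun x : sphere (0 : Euc n) 1 => fderiv ℝ (gradient u) x (EuclideanSpace.single i 1) := h1.clm_apply continuous_const
  exact ((EuclideanSpace.proj (𝕜 := ℝ) j).continuous.comp h3).add (h2.mul ((cont_coord n i).mul (cont_coord n j)))

lemma Sm.bmat_cont' (h : Sm n u) : Continuous fun x : sphere (0 : Euc n) 1 => bmat n u x :=
  continuous_matrix fun i j => h.bmat_cont i j

lemma Sm.bmat_lin {w : Euc n → ℝ} (h : Sm n u) (hw : Sm n w) (a b : ℝ) {x : Euc n} (hx : x ≠ 0) :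
    bmat n (fun y => a * u y + b * w y) x = a • bmat n u x + b • bmat n w x := by
  have hg : gradient (fun y => a * u y + b * w y) =ᶠ[nhds x] fun y => a • gradient u y + b • gradient w y := by
    filter_upwards [ne_nhds hx] with y hy
    have h1 := (((h.diff hy).hasFDerivAt.const_mul a).add ((hw.diff hy).hasFDerivAt.const_mul b)).fderiv
    have h2 : fderiv ℝ (fun y => a * u y + b * w y) y = a • fderiv ℝ u y + b • fderiv ℝ w y := h1
    simp [gradient, h2]
  have hsm : Sm n (fun y => a * u y + b * w y) :=
    ContDiffOn.add (contDiffOn_const.mul h) (contDiffOn_const.mul hw)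
  have hh : Hs n (fun y => a * u y + b * w y) x = a • Hs n u x + b • Hs n w x := by
    rw [Hs, hg.fderiv_eq]
    exact (((h.grad.diff hx).hasFDerivAt.const_smul a).add ((hw.grad.diff hx).hasFDerivAt.const_smul b)).fderiv
  ext i j
  simp [bmat, hsm.ehess_eq hx, h.ehess_eq hx, hw.ehess_eq hx, hh]
  ring
end hom


structure Body (n : ℕ) (H : Euc n → ℝ) : Prop extends Hom1 n H where
  pos : ∀ x : sphere (0 : Euc n) 1, 0 < H x
  pd : ∀ x : sphere (0 : Euc n) 1, (bmat n H x).PosDef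

section body
variable {n : ℕ} {H : Euc n → ℝ}

/-- normalisation -/
def nrm {n : ℕ} (y : Euc n) (hy : y ≠ 0) : sphere (0 : Euc n) 1 :=
  ⟨‖y‖⁻¹ • y, by simp [norm_smul, hy]⟩

lemma nrm_smul {n : ℕ} (y : Euc n) (hy : y ≠ 0) : ‖y‖ • (nrm y hy : Euc n) = y := by
  simp [nrm, smul_smul, hy]

lemma Body.posne (h : Body n H) {y : Euc n} (hy : y ≠ 0) : 0 < H y := by
  rw [← nrm_smul y hy, h.hom _ (norm_pos_iff.2 hy)]
  exact mul_pos (norm_pos_iff.2 hy) (h.pos _)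

lemma Body.hs_pos_sph (h : Body n H) (x : sphere (0 : Euc n) 1) (v : Euc n) (hv : ∀ c : ℝ, v ≠ c • (x : Euc n)) :
    0 < ⟪Hs n H x v, v⟫ := by
  set w : Euc n := v - ⟪(x : Euc n), v⟫ • (x : Euc n) with hw
  have hw0 : w ≠ 0 := fun h0 => hv _ (sub_eq_zero.1 h0)
  have hxx : ⟪(x : Euc n), (x : Euc n)⟫ = 1 := by rw [real_inner_self_eq_norm_sq, sph_norm]; simp
  have hxw : ⟪(x : Euc n), w⟫ = 0 := by
    rw [hw, inner_sub_right, inner_smul_right, hxx]; ring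
  have h1 := (h.pd x).dotProduct_mulVec_pos (x := (w : Fin (n+1) → ℝ)) (fun h0 => hw0 (by ext i; simpa using congrFun h0 i))
  have h2 := h.s.bmat_quad (sph_ne x) w
  rw [hxw] at h2
  have h3 : Hs n H x w = Hs n H x v := by
    rw [hw, map_sub, map_smul, h.hs_self (sph_ne x)]; simp
  have h4 : ⟪Hs n H x v, w⟫ = ⟪Hs n H x v, v⟫ := by
    rw [hw, inner_sub_right, inner_smul_right, h.s.hs_symm (sph_ne x) v x, h.hs_self (sph_ne x)]; simp
  rw [h3, h4] at h2
  have h5 : star (w : Fin (n+1) → ℝ) = (w : Fin (n+1) → ℝ) := by ext i; simp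
  rw [h5, h2] at h1
  linarith

lemma Body.hs_pos (h : Body n H) {y : Euc n} (hy : y ≠ 0) (v : Euc n) (hv : ∀ c : ℝ, v ≠ c • y) :
    0 < ⟪Hs n H y v, v⟫ := by
  have h1 := h.hs_pos_sph (nrm y hy) v (fun c hc => hv (c * ‖y‖⁻¹) (by rw [hc]; simp [nrm, smul_smul]))
  have h2 := h.hs_hom (norm_pos_iff.2 hy) (sph_ne (nrm y hy))
  rw [nrm_smul] at h2
  rw [← h2] at h1
  simp only [_root_.smul_apply, inner_smul_left] at h1
  exact pos_of_mul_pos_right h1 (by simp)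

lemma Body.supp_lt (h : Body n H) (x x' : sphere (0 : Euc n) 1) (hne : x ≠ x') :
    ⟪gradient H x, (x' : Euc n)⟫ < H x' := by
  by_cases hpar : ∃ c : ℝ, (x' : Euc n) = c • (x : Euc n)
  · obtain ⟨c, hc⟩ := hpar
    have hn : |c| = 1 := by
      have := congrArg norm hc
      rw [norm_smul, sph_norm, sph_norm] at this
      simpa using this.symm
    rcases eq_or_eq_neg_of_abs_eq hn with rfl | rfl
    · exact absurd (Subtype.ext (by simpa using hc.symm)) hne
    · rw [hc, inner_smul_right, h.euler (sph_ne x), ← hc]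
      have := h.pos x; have := h.pos x'; linarith
  push Not at hpar
  set v : Euc n := x' - x with hv
  have key : ∀ c : ℝ, v ≠ c • (x : Euc n) := by
    intro c hc
    refine hpar (c + 1) ?_
    rw [add_smul, ← hc, hv]; simp
  have hne0 : ∀ τ : ℝ, (x : Euc n) + τ • v ≠ 0 := by
    intro τ h0
    by_cases ht : τ = 0
    · subst ht; simp only [zero_smul, add_zero] at h0; exact sph_ne x h0
    · refine key (-τ⁻¹) ?_
      have : τ • v = - (x : Euc n) := by rw [← add_right_inj (x : Euc n), h0]; simp
      rw [neg_smul, ← smul_neg, ← this, smul_smul, inv_mul_cancel₀ ht, one_smul]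
  have hnp : ∀ τ : ℝ, ∀ c : ℝ, v ≠ c • ((x : Euc n) + τ • v) := by
    intro τ c hc
    have h1 : (1 - c * τ) • v = c • (x : Euc n) := by
      rw [sub_smul, one_smul, mul_smul]
      nth_rw 1 [hc]
      rw [smul_add]; abel
    by_cases hz : 1 - c * τ = 0
    · rw [hz, zero_smul] at h1
      have : c = 0 := by
        rcases smul_eq_zero.1 h1.symm with h | h
        · exact h
        · exact absurd h (sph_ne x)
      subst this; simp at hz
    · refine key ((1 - c * τ)⁻¹ * c) ?_
      rw [mul_smul, ← h1, smul_smul, inv_mul_cancel₀ hz, one_smul]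
  have hl : ∀ τ : ℝ, HasDerivAt (fun τ : ℝ => (x : Euc n) + τ • v) v τ := by
    intro τ
    simpa using ((hasDerivAt_id τ).smul_const v).const_add (x : Euc n)
  have g1 : ∀ τ : ℝ, HasDerivAt (fun τ : ℝ => H ((x : Euc n) + τ • v)) ⟪gradient H ((x : Euc n) + τ • v), v⟫ τ := by
    intro τ
    rw [grad_inner]
    exact (h.s.diff (hne0 τ)).hasFDerivAt.comp_hasDerivAt τ (hl τ)
  have g2 : ∀ τ : ℝ, HasDerivAt (fun τ : ℝ => ⟪gradient H ((x : Euc n) + τ • v), v⟫) ⟪Hs n H ((x : Euc n) + τ • v) v, v⟫ τ := by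
    intro τ
    have := (h.gr.diff (hne0 τ)).hasFDerivAt.comp_hasDerivAt τ (hl τ)
    have h2 := this.inner ℝ (hasDerivAt_const τ v)
    simp only [inner_zero_right, zero_add] at h2
    exact h2
  obtain ⟨ξ, hξ, e1⟩ := exists_hasDerivAt_eq_slope _ _ (zero_lt_one (α := ℝ))
    (fun τ _ => (g1 τ).continuousAt.continuousWithinAt) (fun τ _ => g1 τ)
  obtain ⟨η, hη, e2⟩ := exists_hasDerivAt_eq_slope _ _ hξ.1
    (fun τ _ => (g2 τ).continuousAt.continuousWithinAt) (fun τ _ => g2 τ)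
  have h3 := h.hs_pos (hne0 η) v (hnp η)
  rw [e2] at h3
  have h4 : 0 < ξ - 0 := by linarith [hξ.1]
  have h5 := (div_pos_iff_of_pos_right h4).1 h3
  rw [e1] at h5
  simp only [zero_smul, add_zero, one_smul, sub_zero, div_one] at h5
  have h6 : (x : Euc n) + v = x' := by rw [hv]; abel
  rw [h6, hv, inner_sub_right, h.euler (sph_ne x)] at h5
  linarith

lemma Body.supp_le (h : Body n H) (x x' : sphere (0 : Euc n) 1) : ⟪gradient H x, (x' : Euc n)⟫ ≤ H x' := by
  by_cases hne : x = x'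
  · subst hne; exact (h.euler (sph_ne x)).le
  · exact (h.supp_lt x x' hne).le

def KH (n : ℕ) (H : Euc n → ℝ) : Set (Euc n) := {y | ∀ x : sphere (0 : Euc n) 1, ⟪(x : Euc n), y⟫ ≤ H x}

def psi (n : ℕ) (u : Euc n → ℝ) (y : Euc n) : Euc n := ‖y‖ • gradient u y

def Mx (n : ℕ) (u : Euc n → ℝ) (x : Euc n) : Euc n →L[ℝ] Euc n :=
  Hs n u x + (innerSL ℝ x).smulRight (gradient u x)

lemma Hom1.psi_fderiv (h : Hom1 n H) {y : Euc n} (hy : y ≠ 0) :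
    HasFDerivAt (psi n H) (Mx n H (‖y‖⁻¹ • y)) y := by
  have h1 := (norm_hasFDerivAt hy).smul (h.gr.diff hy).hasFDerivAt
  refine h1.congr_fderiv ?_
  have hp : 0 < ‖y‖⁻¹ := inv_pos.2 (norm_pos_iff.2 hy)
  have h2 := h.hs_hom hp hy
  have h3 : Hs n H (‖y‖⁻¹ • y) = ‖y‖ • Hs n H y := by
    rw [← h2, smul_smul, mul_inv_cancel₀ (norm_pos_iff.2 hy).ne', one_smul]
  rw [Mx, h3, h.grad_hom hp hy]
  ext v
  simp [Hs]

lemma Hom1.det_Mx (h : Hom1 n H) (x : sphere (0 : Euc n) 1) (h0 : H x ≠ 0) :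
    (Mx n H x).det = (bmat n H x).det := by
  set b := (EuclideanSpace.basisFun (Fin (n+1)) ℝ).toBasis
  have hm : (Mx n H x).det = (LinearMap.toMatrix b b (Mx n H x : Euc n →ₗ[ℝ] Euc n)).det := by
    rw [LinearMap.det_toMatrix]
  set v : Fin (n+1) → ℝ := fun i => gradient H x i - H x * (x : Euc n) i with hv
  set w : Fin (n+1) → ℝ := fun i => (H x)⁻¹ * (x : Euc n) i with hw
  have hfac : LinearMap.toMatrix b b (Mx n H x : Euc n →ₗ[ℝ] Euc n) =
      (1 + Matrix.replicateCol Unit v * Matrix.replicateRow Unit w) * bmat n H x := by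
    have hwB : ∀ j, ∑ k, w k * bmat n H x k j = (x : Euc n) j := by
      intro j
      have h1 := h.s.bmat_mulVec (sph_ne x) (x : Euc n) j
      rw [h.hs_self (sph_ne x), real_inner_self_eq_norm_sq, sph_norm] at h1
      simp only [Matrix.mulVec, dotProduct] at h1
      have h2 : ∑ k, w k * bmat n H x k j = (H x)⁻¹ * ∑ k, bmat n H x j k * (x : Euc n) k := by
        rw [Finset.mul_sum]
        refine Finset.sum_congr rfl fun k _ => ?_
        have := (h.s.bmat_symm (sph_ne x)).apply k j
        simp only [star_trivial] at this
        rw [hw, ← this]; ring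
      rw [h2, h1]
      simp [h0]
    ext i j
    rw [add_mul, one_mul, Matrix.add_apply, Matrix.mul_assoc, Matrix.mul_apply]
    simp only [Matrix.mul_apply, Matrix.replicateCol_apply, Matrix.replicateRow_apply, hwB]
    simp [LinearMap.toMatrix_apply, b, Mx, bmat, hv, EuclideanSpace.inner_single_right]
    rw [h.s.ehess_symm (sph_ne x), h.s.ehess_eq (sph_ne x)]
    ring
  rw [hm, hfac, Matrix.det_mul, Matrix.det_one_add_replicateCol_mul_replicateRow]
  have : w ⬝ᵥ v = 0 := by
    have h1 := h.euler (sph_ne x)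
    have h2 : ⟪(x : Euc n), (x : Euc n)⟫ = 1 := by rw [real_inner_self_eq_norm_sq, sph_norm]; simp
    rw [euc_inner] at h1 h2
    have : w ⬝ᵥ v = (H x)⁻¹ * (∑ i, gradient H x i * (x : Euc n) i - H x * ∑ i, (x : Euc n) i * (x : Euc n) i) := by
      rw [dotProduct, Finset.mul_sum, ← Finset.sum_sub_distrib, Finset.mul_sum]
      exact Finset.sum_congr rfl fun i _ => by simp only [hv, hw]; ring
    rw [this, h1, h2]; ring
  rw [this]; ring

lemma psi_nrm (h : Hom1 n H) {y : Euc n} (hy : y ≠ 0) : psi n H y = ‖y‖ • gradient H (nrm y hy) := by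
  simp [psi, nrm, h.grad_hom (inv_pos.2 (norm_pos_iff.2 hy)) hy]

lemma Body.grad_ne (h : Body n H) (x : sphere (0 : Euc n) 1) : gradient H x ≠ 0 := by
  intro h0
  have := h.euler (sph_ne x)
  rw [h0, inner_zero_left] at this
  exact (h.pos x).ne this

lemma Body.psi_inj (h : Body n H) : Set.InjOn (psi n H) {(0 : Euc n)}ᶜ := by
  intro y hy y' hy' e
  have hy : y ≠ 0 := hy
  have hy' : y' ≠ 0 := hy'
  rw [psi_nrm h.toHom1 hy, psi_nrm h.toHom1 hy'] at e
  set x := nrm y hy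
  set x' := nrm y' hy'
  have p := norm_pos_iff.2 hy
  have p' := norm_pos_iff.2 hy'
  by_cases hx : x = x'
  · rw [← hx] at e
    have : ‖y‖ = ‖y'‖ := smul_left_injective ℝ (h.grad_ne x) e
    rw [← nrm_smul y hy, ← nrm_smul y' hy', this]
    change ‖y'‖ • (x : Euc n) = ‖y'‖ • (x' : Euc n)
    rw [hx]
  · exfalso
    have e1 := congrArg (fun z => ⟪z, (x : Euc n)⟫) e
    have e2 := congrArg (fun z => ⟪z, (x' : Euc n)⟫) e
    simp only [inner_smul_left] at e1 e2
    rw [h.euler (sph_ne _)] at e1 e2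
    simp only [conj_trivial] at e1 e2
    have a1 := mul_lt_mul_of_pos_left (h.supp_lt x' x (Ne.symm hx)) p'
    have a2 := mul_lt_mul_of_pos_left (h.supp_lt x x' hx) p
    rw [← e1] at a1
    rw [e2] at a2
    have b1 := lt_of_mul_lt_mul_right a1 (h.pos x).le
    have b2 := lt_of_mul_lt_mul_right a2 (h.pos x').le
    linarith
end body


section vol
variable {n : ℕ} {H : Euc n → ℝ}

lemma KH_meas (n : ℕ) (H : Euc n → ℝ) : MeasurableSet (KH n H) := by
  have : KH n H = ⋂ x : sphere (0 : Euc n) 1, {y | ⟪(x : Euc n), y⟫ ≤ H x} := by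
    ext y; simp [KH]
  rw [this]
  refine (isClosed_iInter fun x => ?_).measurableSet
  exact isClosed_le (by fun_prop) continuous_const

lemma Sm.det_cont (h : Sm n H) : Continuous fun x : sphere (0 : Euc n) 1 => (bmat n H x).det :=
  h.bmat_cont'.matrix_det

lemma sph_integrable {f : sphere (0 : Euc n) 1 → ℝ} (hf : Continuous f) : Integrable f (sphMeasure n) :=
  hf.integrable_of_hasCompactSupport (HasCompactSupport.of_compactSpace _)

lemma Body.det_pos (h : Body n H) (x : sphere (0 : Euc n) 1) : 0 < (bmat n H x).det := (h.pd x).det_pos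

lemma Body.det_psi (h : Body n H) (x : sphere (0 : Euc n) 1) :
    ENNReal.ofReal |(Mx n H (‖(x : Euc n)‖⁻¹ • (x : Euc n))).det| = ENNReal.ofReal (bmat n H x).det := by
  rw [sph_norm, inv_one, one_smul, h.det_Mx x (h.pos x).ne', abs_of_pos (h.det_pos x)]

lemma norm_smul_inv {s : ℝ} (hs : 0 < s) (x : Euc n) : ‖s • x‖⁻¹ • (s • x) = ‖x‖⁻¹ • x := by
  rw [norm_smul, Real.norm_of_nonneg hs.le, smul_smul, mul_inv, mul_comm s⁻¹, mul_assoc, inv_mul_cancel₀ hs.ne', mul_one]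

lemma Body.polar (h : Body n H) (ρ : Euc n → ℝ) (hρ : ∀ s : ℝ, 0 < s → ∀ x, x ≠ 0 → ρ (s • x) = ρ x)
    (hc : ContinuousOn ρ {(0 : Euc n)}ᶜ) (hp : ∀ x : sphere (0 : Euc n) 1, 0 < ρ x) :
    MeasurableSet {y : Euc n | y ≠ 0 ∧ ‖y‖ < ρ y} ∧
    ∫⁻ y in {y : Euc n | y ≠ 0 ∧ ‖y‖ < ρ y}, ENNReal.ofReal |(Mx n H (‖y‖⁻¹ • y)).det|
      = ENNReal.ofReal (∫ x : sphere (0 : Euc n) 1, (bmat n H x).det * (ρ x ^ (n+1) / (n+1)) ∂sphMeasure n) := by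
  have hm : MeasurableSet {y : Euc n | y ≠ 0 ∧ ‖y‖ < ρ y} := by
    have h1 : ContinuousOn (fun y => ρ y - ‖y‖) {(0 : Euc n)}ᶜ := hc.sub continuous_norm.continuousOn
    have h2 := h1.isOpen_inter_preimage isOpen_compl_singleton (isOpen_Ioi (a := (0:ℝ)))
    convert h2.measurableSet using 1
    ext y; simp
  refine ⟨hm, ?_⟩
  have hρc : Continuous fun x : sphere (0 : Euc n) 1 => ρ x :=
    hc.comp_continuous continuous_subtype_val (fun x => sph_ne x)
  rw [polar_lint n ρ (fun y => ENNReal.ofReal |(Mx n H (‖y‖⁻¹ • y)).det|) hρ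
    (fun s hs x hx => by simp only [norm_smul_inv hs]) hp hρc.measurable (by
      simp_rw [h.det_psi]
      exact h.s.det_cont.measurable.ennreal_ofReal) hm]
  rw [ofReal_integral_eq_lintegral_ofReal]
  · refine lintegral_congr fun x => ?_
    rw [h.det_psi, ENNReal.ofReal_mul (h.det_pos x).le]
  · apply sph_integrable
    exact h.s.det_cont.mul ((hρc.pow _).div_const _)
  · refine Filter.Eventually.of_forall fun x => ?_
    have := h.det_pos x; have := hp x
    positivity

lemma Body.vol_lower (h : Body n H) :
    ENNReal.ofReal ((∫ x : sphere (0 : Euc n) 1, (bmat n H x).det ∂sphMeasure n) / (n+1)) ≤ volume (KH n H) := by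
  obtain ⟨hm, he⟩ := h.polar (fun _ => 1) (by simp) continuousOn_const (by simp)
  rw [lintegral_abs_det_fderiv_eq_addHaar_image volume hm
    (fun y hy => (h.psi_fderiv hy.1).hasFDerivWithinAt) (h.psi_inj.mono fun y hy => hy.1)] at he
  rw [integral_mul_const] at he
  simp only [one_pow, mul_one_div] at he
  rw [← he]
  refine measure_mono ?_
  rintro _ ⟨y, ⟨hy, hy1⟩, rfl⟩ x'
  rw [psi_nrm h.toHom1 hy, inner_smul_right, real_inner_comm]
  have h1 := h.supp_le (nrm y hy) x'
  have h2 := norm_nonneg y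
  have h3 := h.pos x'
  nlinarith

lemma Body.cover (h : Body n H) {y : Euc n} (hy : y ≠ 0) :
    ∃ (s : ℝ) (x : sphere (0 : Euc n) 1), 0 < s ∧ y = s • gradient H x := by
  have hcont : Continuous fun x : sphere (0 : Euc n) 1 => ⟪(x : Euc n), y⟫ / H x :=
    Continuous.div (by fun_prop) h.s.sph (fun x => (h.pos x).ne')
  have : Nonempty (sphere (0 : Euc n) 1) := ⟨nrm y hy⟩
  obtain ⟨x, -, hx⟩ := isCompact_univ.exists_isMaxOn Set.univ_nonempty hcont.continuousOn
  have hx : ∀ z : sphere (0 : Euc n) 1, ⟪(z : Euc n), y⟫ / H z ≤ ⟪(x : Euc n), y⟫ / H x := fun z => hx (Set.mem_univ z)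
  set s := ⟪(x : Euc n), y⟫ / H x with hs
  have hs0 : 0 < s := by
    refine lt_of_lt_of_le ?_ (hx (nrm y hy))
    refine div_pos ?_ (h.pos _)
    simp only [nrm, inner_smul_left, real_inner_self_eq_norm_sq]
    have := norm_pos_iff.2 hy
    simp only [conj_trivial]; positivity
  refine ⟨s, x, hs0, ?_⟩
  have hmax : IsLocalMax (fun z : Euc n => ⟪z, y⟫ - s * H z) (x : Euc n) := by
    have h0 : ⟪(x : Euc n), y⟫ - s * H x = 0 := by
      rw [hs, div_mul_cancel₀ _ (h.pos x).ne', sub_self]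
    filter_upwards [ne_nhds (sph_ne x)] with z hz
    simp only [h0]
    have h1 := hx (nrm z hz)
    rw [div_le_iff₀ (h.pos _)] at h1
    have h2 : ⟪z, y⟫ - s * H z = ‖z‖ * (⟪(nrm z hz : Euc n), y⟫ - s * H (nrm z hz)) := by
      conv_lhs => rw [← nrm_smul z hz, inner_smul_left, h.hom _ (norm_pos_iff.2 hz)]
      simp only [conj_trivial]; ring
    rw [h2]
    exact mul_nonpos_of_nonneg_of_nonpos (norm_nonneg _) (by linarith)
  have hd : HasFDerivAt (fun z : Euc n => ⟪z, y⟫ - s * H z) (innerSL ℝ y - s • fderiv ℝ H x) (x : Euc n) := by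
    refine HasFDerivAt.sub ?_ ((h.s.diff (sph_ne x)).hasFDerivAt.const_mul s)
    have := (innerSL ℝ y).hasFDerivAt (x := (x : Euc n))
    refine this.congr_of_eventuallyEq (Filter.Eventually.of_forall fun z => ?_)
    simp [real_inner_comm]
  have hz := hmax.hasFDerivAt_eq_zero hd
  refine ext_inner_right ℝ fun v => ?_
  have := congrArg (fun L => L v) hz
  simp only [_root_.sub_apply, _root_.smul_apply, innerSL_apply_apply, smul_eq_mul, _root_.zero_apply] at this
  rw [inner_smul_left, grad_inner]
  simp only [conj_trivial]
  linarith

lemma Body.vol_upper (h : Body n H) {w : Euc n → ℝ} (hw : Hom1 n w) (hwp : ∀ x : sphere (0 : Euc n) 1, 0 < w x) :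
    volume (KH n w) ≤ ENNReal.ofReal ((∫ x : sphere (0 : Euc n) 1, (bmat n H x).det * (w x / H x) ^ (n+1) ∂sphMeasure n) / (n+1)) := by
  set I := (∫ x : sphere (0 : Euc n) 1, (bmat n H x).det * (w x / H x) ^ (n+1) ∂sphMeasure n) / (n+1) with hI
  have key : ∀ ε : ℝ, 0 < ε → volume (KH n w) ≤ ENNReal.ofReal ((1 + ε) ^ (n+1) * I) := by
    intro ε hε
    set ρ : Euc n → ℝ := fun y => (1 + ε) * (w y / H y) with hρ
    obtain ⟨hm, he⟩ := h.polar ρ (fun s hs x hx => by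
        simp only [hρ]; rw [hw.hom s hs, h.hom s hs, mul_div_mul_left _ _ hs.ne'])
      (continuousOn_const.mul (hw.s.continuousOn.div h.s.continuousOn fun y hy => (h.posne hy).ne'))
      (fun x => mul_pos (by linarith) (div_pos (hwp x) (h.pos x)))
    have h1 := addHaar_image_le_lintegral_abs_det_fderiv volume hm (f := psi n H)
      (fun y hy => (h.psi_fderiv hy.1).hasFDerivWithinAt)
    rw [he] at h1
    have hsub : KH n w ⊆ {0} ∪ psi n H '' {y : Euc n | y ≠ 0 ∧ ‖y‖ < ρ y} := by
      intro y hy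
      by_cases hy0 : y = 0
      · left; exact hy0
      right
      obtain ⟨s, x, hs, e⟩ := h.cover hy0
      refine ⟨s • (x : Euc n), ⟨smul_ne_zero hs.ne' (sph_ne x), ?_⟩, ?_⟩
      · have h2 := hy x
        rw [e, inner_smul_right, real_inner_comm, h.euler (sph_ne x)] at h2
        simp only [hρ]
        rw [hw.hom s hs, h.hom s hs, mul_div_mul_left _ _ hs.ne', norm_smul, sph_norm, Real.norm_of_nonneg hs.le, mul_one]
        have h3 := (le_div_iff₀ (h.pos x)).2 h2
        have h4 := div_pos (hwp x) (h.pos x)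
        nlinarith
      · rw [psi, h.grad_hom hs (sph_ne x), norm_smul, sph_norm, Real.norm_of_nonneg hs.le, mul_one, e]
    have h2 : volume (KH n w) ≤ volume (psi n H '' {y : Euc n | y ≠ 0 ∧ ‖y‖ < ρ y}) := by
      refine (measure_mono hsub).trans ((measure_union_le _ _).trans ?_)
      simp
    refine h2.trans (h1.trans (le_of_eq ?_))
    congr 1
    rw [hI, mul_div_assoc', ← integral_const_mul, ← integral_div]
    congr 1
    ext x
    simp only [hρ, mul_pow]; ring
  have ht : Filter.Tendsto (fun ε : ℝ => ENNReal.ofReal ((1 + ε) ^ (n+1) * I)) (nhdsWithin 0 (Set.Ioi 0)) (nhds (ENNReal.ofReal I)) := by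
    have : Continuous (fun ε : ℝ => ENNReal.ofReal ((1 + ε) ^ (n+1) * I)) := ENNReal.continuous_ofReal.comp (by fun_prop)
    have h2 := (this.tendsto 0).mono_left (nhdsWithin_le_nhds (s := Set.Ioi 0))
    simpa using h2
  refine ge_of_tendsto ht ?_
  filter_upwards [self_mem_nhdsWithin] with ε hε using key ε hε

def Vol (n : ℕ) (H : Euc n → ℝ) : ℝ := ∫ x : sphere (0 : Euc n) 1, (bmat n H x).det ∂sphMeasure n

lemma Body.vol_nonneg (h : Body n H) : 0 ≤ Vol n H := integral_nonneg fun x => (h.det_pos x).le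

lemma Body.vol_le (h : Body n H) {w : Euc n → ℝ} (hw : Body n w) :
    Vol n w ≤ ∫ x : sphere (0 : Euc n) 1, (bmat n H x).det * (w x / H x) ^ (n+1) ∂sphMeasure n := by
  have h1 := hw.vol_lower.trans (h.vol_upper hw.toHom1 hw.pos)
  rw [ENNReal.ofReal_le_ofReal_iff] at h1
  · exact (div_le_div_iff_of_pos_right (by positivity)).1 h1
  · refine div_nonneg (integral_nonneg fun x => ?_) (by positivity)
    have := h.det_pos x; have := h.pos x; have := hw.pos x; positivity

/-- Brunn--Minkowski (multiplicative form). -/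
lemma Body.bm (h : Body n H) {w v : Euc n → ℝ} (hw : Body n w) (hv : Body n v)
    (hm : ∀ x, (w x + v x) / 2 = H x) : Vol n w * Vol n v ≤ Vol n H ^ 2 := by
  have h1 := bm_mid n (KH_meas n w) (KH_meas n v) (KH_meas n H) (fun a ha b hb x => by
    rw [inner_smul_right, inner_add_right]
    have := ha x; have := hb x; have := hm x; linarith)
  have h2 := h.vol_upper h.toHom1 h.pos
  have e : (∫ x : sphere (0 : Euc n) 1, (bmat n H x).det * (H x / H x) ^ (n+1) ∂sphMeasure n) = Vol n H := by
    refine integral_congr_ae (Filter.Eventually.of_forall fun x => ?_)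
    simp [div_self (h.pos x).ne']
  rw [e] at h2
  have h3 := (mul_le_mul' hw.vol_lower hv.vol_lower).trans (h1.trans (pow_le_pow_left' h2 2))
  have p1 := hw.vol_nonneg
  have p2 := hv.vol_nonneg
  have p3 := h.vol_nonneg
  change ENNReal.ofReal (Vol n w / _) * ENNReal.ofReal (Vol n v / _) ≤ _ at h3
  rw [← ENNReal.ofReal_mul (by positivity), ← ENNReal.ofReal_pow (by positivity), ENNReal.ofReal_le_ofReal_iff (by positivity)] at h3
  rw [div_mul_div_comm, div_pow, ← pow_two] at h3
  exact (div_le_div_iff_of_pos_right (by positivity)).1 h3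
end vol


lemma det_hasDeriv {m : Type*} [Fintype m] [DecidableEq m] (A B : Matrix m m ℝ) (t : ℝ) (h : (A + t • B).det ≠ 0) :
    HasDerivAt (fun s : ℝ => (A + s • B).det) ((A + t • B).adjugate * B).trace t := by
  set C := A + t • B with hC
  have hu : IsUnit C.det := isUnit_iff_ne_zero.2 h
  set M := C⁻¹ * B with hM
  have h1 : ∀ s : ℝ, (A + s • B).det = C.det * (1 + (s - t) • M).det := by
    intro s
    rw [← Matrix.det_mul, mul_add, mul_one, hM, Matrix.mul_smul, ← Matrix.mul_assoc, Matrix.mul_nonsing_inv _ hu, Matrix.one_mul, hC]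
    congr 1
    rw [sub_smul]; abel
  have h2 : HasDerivAt (fun r : ℝ => (1 + r • M).det) M.trace 0 := by
    set P := (1 + (Polynomial.X : Polynomial ℝ) • M.map ⇑Polynomial.C).det.divX.divX
    have a := ((hasDerivAt_id (0:ℝ)).const_mul M.trace).const_add 1
    have b := (P.hasDerivAt (0:ℝ)).mul ((hasDerivAt_id (0:ℝ)).pow 2)
    have := a.add b
    simp at this
    refine this.congr_of_eventuallyEq (Filter.Eventually.of_forall fun r => ?_)
    simp only [Matrix.det_one_add_smul r M, Pi.add_apply, Pi.mul_apply, Pi.pow_apply, id]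
    rfl
  have h3 : HasDerivAt (fun s : ℝ => (1 + (s - t) • M).det) M.trace t := by
    have h2' : HasDerivAt (fun r : ℝ => (1 + r • M).det) M.trace (t - t) := by rw [sub_self]; exact h2
    have := HasDerivAt.comp (h₂ := fun r : ℝ => (1 + r • M).det) (h := fun s : ℝ => s - t) t h2' ((hasDerivAt_id t).sub_const t)
    simpa [Function.comp_def] using this
  simp_rw [h1]
  have h4 := h3.const_mul C.det
  have h5 : C.det * M.trace = (C.adjugate * B).trace := by
    rw [hM, Matrix.inv_def, Matrix.smul_mul, Matrix.trace_smul, smul_eq_mul, ← mul_assoc, Ring.mul_inverse_cancel _ hu, one_mul]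
  rw [← h5]; exact h4

lemma sph_deriv (n : ℕ) (g g' : ℝ → sphere (0 : Euc n) 1 → ℝ) (t₀ δ : ℝ) (hδ : 0 < δ)
    (hg : ∀ t, |t - t₀| ≤ δ → Continuous (g t))
    (hg' : ContinuousOn (fun z : ℝ × sphere (0 : Euc n) 1 => g' z.1 z.2) (Set.Icc (t₀ - δ) (t₀ + δ) ×ˢ Set.univ))
    (hd : ∀ t, |t - t₀| ≤ δ → ∀ x, HasDerivAt (fun t => g t x) (g' t x) t) :
    HasDerivAt (fun t => ∫ x, g t x ∂sphMeasure n) (∫ x, g' t₀ x ∂sphMeasure n) t₀ := by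
  obtain ⟨C, hC⟩ := (isCompact_Icc.prod isCompact_univ).exists_bound_of_continuousOn hg'
  have mem : ∀ t, t ∈ Set.Icc (t₀ - δ) (t₀ + δ) → |t - t₀| ≤ δ := by
    intro t ht; rw [abs_le]; constructor <;> linarith [ht.1, ht.2]
  have hn : Set.Icc (t₀ - δ) (t₀ + δ) ∈ nhds t₀ := Icc_mem_nhds (by linarith) (by linarith)
  have hc : Continuous (g' t₀) := by
    have : Continuous fun x : sphere (0 : Euc n) 1 => ((t₀, x) : ℝ × sphere (0 : Euc n) 1) := by fun_prop
    exact hg'.comp_continuous this (fun x => ⟨⟨by simp [hδ.le], by simp [hδ.le]⟩, Set.mem_univ _⟩)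
  refine (hasDerivAt_integral_of_dominated_loc_of_deriv_le (bound := fun _ => C) hn ?_ ?_ ?_ ?_ ?_ ?_).2
  · filter_upwards [hn] with t ht
    exact (hg t (mem t ht)).aestronglyMeasurable
  · exact sph_integrable (hg t₀ (by simpa using hδ.le))
  · exact hc.aestronglyMeasurable
  · refine Filter.Eventually.of_forall fun x t ht => hC (t, x) ⟨ht, Set.mem_univ _⟩
  · exact integrable_const C
  · refine Filter.Eventually.of_forall fun x t ht => hd t (mem t ht) x

section pert
variable {n : ℕ} {H u : Euc n → ℝ}

def pt (H u : Euc n → ℝ) (t : ℝ) : Euc n → ℝ := fun y => H y + t * u y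

lemma pt_hom (h : Hom1 n H) (hu : Hom1 n u) (t : ℝ) : Hom1 n (pt H u t) where
  hom c hc x := by simp only [pt, h.hom c hc, hu.hom c hc]; ring
  sm := ContDiffOn.add h.sm (contDiffOn_const.mul hu.sm)

lemma pt_bmat (h : Hom1 n H) (hu : Hom1 n u) (t : ℝ) (x : sphere (0 : Euc n) 1) :
    bmat n (pt H u t) x = bmat n H x + t • bmat n u x := by
  have := h.s.bmat_lin hu.s 1 t (sph_ne x)
  simp only [one_mul, one_smul] at this
  exact this

lemma Body.pert (h : Body n H) (hu : Hom1 n u) : ∃ δ > 0, ∀ t, |t| < δ → Body n (pt H u t) := by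
  have c0 := h.s.sph
  have c1 := hu.s.sph
  have b0 := h.s.bmat_cont'
  have b1 := hu.s.bmat_cont'
  have e1 : ∀ᶠ t in nhds (0:ℝ), ∀ x ∈ (Set.univ : Set (sphere (0 : Euc n) 1)), 0 < H x + t * u x := by
    refine isCompact_univ.eventually_forall_of_forall_eventually fun x _ => ?_
    have hc : Continuous fun z : ℝ × sphere (0 : Euc n) 1 => H z.2 + z.1 * u z.2 :=
      (c0.comp continuous_snd).add (continuous_fst.mul (c1.comp continuous_snd))
    refine hc.continuousAt.eventually_const_lt ?_ 
    simpa using h.pos x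
  have e2 : ∀ᶠ t in nhds (0:ℝ), ∀ z ∈ (Set.univ : Set (sphere (0 : Euc n) 1 × sphere (0 : Euc n) 1)),
      0 < ((z.2 : Euc n) : Fin (n+1) → ℝ) ⬝ᵥ ((bmat n H z.1 + t • bmat n u z.1) *ᵥ ((z.2 : Euc n) : Fin (n+1) → ℝ)) := by
    refine isCompact_univ.eventually_forall_of_forall_eventually fun z _ => ?_
    have hv : Continuous fun z : ℝ × (sphere (0 : Euc n) 1 × sphere (0 : Euc n) 1) => ((z.2.2 : Euc n) : Fin (n+1) → ℝ) :=
      (PiLp.continuous_ofLp 2 _).comp (continuous_subtype_val.comp (continuous_snd.comp continuous_snd))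
    have hB0 := b0.comp ((continuous_fst (X := sphere (0 : Euc n) 1) (Y := sphere (0 : Euc n) 1)).comp (continuous_snd (X := ℝ)))
    have hB1 := b1.comp ((continuous_fst (X := sphere (0 : Euc n) 1) (Y := sphere (0 : Euc n) 1)).comp (continuous_snd (X := ℝ)))
    have hc := hv.dotProduct ((hB0.add (continuous_fst.smul hB1)).matrix_mulVec hv)
    refine hc.continuousAt.eventually_const_lt ?_
    have := (h.pd z.1).dotProduct_mulVec_pos (x := ((z.2 : Euc n) : Fin (n+1) → ℝ)) (fun h0 => sph_ne z.2 (by ext i; simpa using congrFun h0 i))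
    simpa using this
  obtain ⟨δ, hδ, hb⟩ := Metric.eventually_nhds_iff.1 (e1.and e2)
  refine ⟨δ, hδ, fun t ht => ?_⟩
  obtain ⟨f1, f2⟩ := hb (y := t) (by simpa using ht)
  refine { toHom1 := pt_hom h.toHom1 hu t, pos := fun x => f1 x (Set.mem_univ _), pd := fun x => ?_ }
  refine Matrix.PosDef.of_dotProduct_mulVec_pos ((pt_hom h.toHom1 hu t).s.bmat_symm (sph_ne x)) fun v hv => ?_
  set w : Euc n := WithLp.toLp 2 v with hw
  have hw0 : w ≠ 0 := by
    intro h0; apply hv; ext i; simpa [hw] using congrArg (fun z : Euc n => z i) h0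
  have h3 := f2 (x, nrm w hw0) (Set.mem_univ _)
  rw [pt_bmat h.toHom1 hu]
  have h4 : v = ‖w‖ • ((nrm w hw0 : Euc n) : Fin (n+1) → ℝ) := by
    have := nrm_smul w hw0
    ext i; simpa [hw] using congrArg (fun z : Euc n => z i) this.symm
  have hp := norm_pos_iff.2 hw0
  rw [star_trivial, h4, Matrix.mulVec_smul, smul_dotProduct, dotProduct_smul, smul_eq_mul, smul_eq_mul]
  positivity

lemma T_cont (h : Hom1 n H) (hu : Hom1 n u) : Continuous fun z : ℝ × sphere (0 : Euc n) 1 =>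
    ((bmat n H z.2 + z.1 • bmat n u z.2).adjugate * bmat n u z.2).trace := by
  have hB0 := h.s.bmat_cont'.comp (continuous_snd (X := ℝ) (Y := sphere (0 : Euc n) 1))
  have hB1 := hu.s.bmat_cont'.comp (continuous_snd (X := ℝ) (Y := sphere (0 : Euc n) 1))
  exact ((hB0.add (continuous_fst.smul hB1)).matrix_adjugate.matrix_mul hB1).matrix_trace

lemma det_cont2 (h : Hom1 n H) (hu : Hom1 n u) : Continuous fun z : ℝ × sphere (0 : Euc n) 1 =>
    (bmat n H z.2 + z.1 • bmat n u z.2).det := by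
  have hB0 := h.s.bmat_cont'.comp (continuous_snd (X := ℝ) (Y := sphere (0 : Euc n) 1))
  have hB1 := hu.s.bmat_cont'.comp (continuous_snd (X := ℝ) (Y := sphere (0 : Euc n) 1))
  exact (hB0.add (continuous_fst.smul hB1)).matrix_det

lemma Body.det_ptne (h : Body n H) (hu : Hom1 n u) {t : ℝ} (ht : Body n (pt H u t)) (x : sphere (0 : Euc n) 1) :
    (bmat n H x + t • bmat n u x).det ≠ 0 := by
  rw [← pt_bmat h.toHom1 hu]; exact (ht.det_pos x).ne'

lemma Body.vol_deriv (h : Body n H) (hu : Hom1 n u) :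
    HasDerivAt (fun t => Vol n (pt H u t)) (∫ x : sphere (0 : Euc n) 1, ((bmat n H x).adjugate * bmat n u x).trace ∂sphMeasure n) 0 := by
  obtain ⟨δ, hδ, hb⟩ := h.pert hu
  have := sph_deriv n (fun t x => (bmat n H x + t • bmat n u x).det)
    (fun t x => ((bmat n H x + t • bmat n u x).adjugate * bmat n u x).trace) 0 (δ/2) (by positivity)
    (fun t _ => (det_cont2 h.toHom1 hu).comp (by fun_prop : Continuous fun x : sphere (0 : Euc n) 1 => (t, x)))
    (T_cont h.toHom1 hu).continuousOn
    (fun t ht x => det_hasDeriv _ _ t (h.det_ptne hu (hb t (by rw [sub_zero] at ht; linarith)) x))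
  simp only [zero_smul, add_zero] at this
  simp only [Vol, pt_bmat h.toHom1 hu]
  exact this

lemma Body.lemL (h : Body n H) (hu : Hom1 n u) :
    ∫ x : sphere (0 : Euc n) 1, ((bmat n H x).adjugate * bmat n u x).trace ∂sphMeasure n
      = (n+1) * ∫ x : sphere (0 : Euc n) 1, u x / H x * (bmat n H x).det ∂sphMeasure n := by
  obtain ⟨δ, hδ, hb⟩ := h.pert hu
  have c0 := h.s.sph
  have c1 := hu.s.sph
  have cf : Continuous fun x : sphere (0 : Euc n) 1 => u x / H x := c1.div c0 fun x => (h.pos x).ne'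
  have hR := sph_deriv n (fun t x => (bmat n H x).det * (1 + t * (u x / H x)) ^ (n+1))
    (fun t x => (bmat n H x).det * (((n+1 : ℕ) : ℝ) * (1 + t * (u x / H x)) ^ n * (u x / H x))) 0 1 one_pos
    (fun t _ => h.s.det_cont.mul ((continuous_const.add (continuous_const.mul cf)).pow _))
    (by
      have d2 := h.s.det_cont.comp (continuous_snd (X := ℝ) (Y := sphere (0 : Euc n) 1))
      have f2 := cf.comp (continuous_snd (X := ℝ) (Y := sphere (0 : Euc n) 1))
      exact (d2.mul ((continuous_const.mul ((continuous_const.add (continuous_fst.mul f2)).pow n)).mul f2)).continuousOn)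
    (fun t _ x => by
      have a : HasDerivAt (fun t : ℝ => 1 + t * (u x / H x)) (u x / H x) t := by
        simpa using ((hasDerivAt_id t).mul_const (u x / H x)).const_add 1
      have := (a.pow (n+1)).const_mul (bmat n H x).det
      simpa using this)
  have hD := hR.sub (h.vol_deriv hu)
  have hmin : IsLocalMin ((fun t : ℝ => ∫ x : sphere (0 : Euc n) 1, (bmat n H x).det * (1 + t * (u x / H x)) ^ (n+1) ∂sphMeasure n)
      - fun t => Vol n (pt H u t)) 0 := by
    have hn : Metric.ball (0:ℝ) δ ∈ nhds 0 := Metric.ball_mem_nhds _ hδ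
    filter_upwards [hn] with t ht
    have h1 := h.vol_le (hb t (by simpa using ht))
    have e : ∀ x : sphere (0 : Euc n) 1, pt H u t x / H x = 1 + t * (u x / H x) := by
      intro x; have := (h.pos x).ne'; simp only [_root_.pt]; field_simp
    simp_rw [e] at h1
    have e0 : Vol n (pt H u 0) = Vol n H := by simp [Vol, pt_bmat h.toHom1 hu]
    simp only [Pi.sub_apply, e0, zero_mul, add_zero, one_pow, mul_one]
    have : Vol n H = ∫ x : sphere (0 : Euc n) 1, (bmat n H x).det ∂sphMeasure n := rfl
    rw [← this]; linarith
  have hz := hmin.hasDerivAt_eq_zero hD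
  rw [← sub_eq_zero.1 hz, ← integral_const_mul]
  refine integral_congr_ae (Filter.Eventually.of_forall fun x => ?_)
  simp; ring

lemma second_test (φ ψ : ℝ → ℝ) (c : ℝ) (hφ : ∀ᶠ t in nhds 0, HasDerivAt φ (ψ t) t) (hψ : HasDerivAt ψ c 0)
    (hmax : IsLocalMax φ 0) : c ≤ 0 := by
  by_contra hc
  push Not at hc
  have e : deriv φ =ᶠ[nhds 0] ψ := by filter_upwards [hφ] with t ht using ht.deriv
  have h1 : deriv (deriv φ) 0 = c := by rw [e.deriv_eq, hψ.deriv]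
  have h2 : deriv φ 0 = 0 := hmax.deriv_eq_zero
  have hmin := isLocalMin_of_deriv_deriv_pos (by rw [h1]; exact hc) h2 hφ.self_of_nhds.continuousAt
  have hconst : φ =ᶠ[nhds 0] fun _ => φ 0 := by
    filter_upwards [hmax, hmin] with t a b using le_antisymm a b
  have h3 : deriv (deriv φ) 0 = 0 := by
    have h4 : deriv φ =ᶠ[nhds 0] fun _ => 0 := by
      have := hconst.deriv
      filter_upwards [this] with t ht
      rw [ht]; simp
    rw [h4.deriv_eq]; simp
  linarith

lemma Body.vol_pos (h : Body n H) : 0 < Vol n H := by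
  have h0 : (EuclideanSpace.single 0 1 : Euc n) ∈ sphere (0 : Euc n) 1 := by simp
  exact h.s.det_cont.integral_pos_of_hasCompactSupport_nonneg_nonzero (HasCompactSupport.of_compactSpace _)
    (fun x => (h.det_pos x).le) (x := ⟨_, h0⟩) (h.det_pos _).ne'

lemma pt_shift (H u : Euc n → ℝ) (t s : ℝ) : pt (pt H u t) u s = pt H u (t + s) := by
  ext y; simp only [_root_.pt]; ring

lemma Body.second (h : Body n H) (hu : Hom1 n u)
    (hz : ∫ x : sphere (0 : Euc n) 1, u x / H x * (bmat n H x).det ∂sphMeasure n = 0) :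
    ∫ x : sphere (0 : Euc n) 1, u x / H x * ((bmat n H x).adjugate * bmat n u x).trace ∂sphMeasure n
      ≤ ∫ x : sphere (0 : Euc n) 1, (u x / H x) ^ 2 * (bmat n H x).det ∂sphMeasure n := by
  obtain ⟨δ, hδ, hb⟩ := h.pert hu
  have c0 := h.s.sph
  have c1 := hu.s.sph
  set P : ℝ → ℝ := fun t => Vol n (pt H u t) with hP
  set G : ℝ → ℝ := fun t => ∫ x : sphere (0 : Euc n) 1, (n+1) * (u x / (H x + t * u x) * (bmat n H x + t • bmat n u x).det) ∂sphMeasure n with hG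
  have hPd : ∀ t, |t| < δ → HasDerivAt P (G t) t := by
    intro t ht
    have hbt := hb t ht
    have h1 := hbt.vol_deriv hu
    rw [hbt.lemL hu] at h1
    simp_rw [pt_shift] at h1
    have h2 : HasDerivAt (fun s => P (t + s)) (G t) 0 := by
      refine h1.congr_deriv ?_
      simp only [hG]
      rw [integral_const_mul]
      congr 1
      refine integral_congr_ae (Filter.Eventually.of_forall fun x => ?_)
      simp only [pt_bmat h.toHom1 hu]; rfl
    have h3 : HasDerivAt (fun s => P (t + s)) (G t) (t - t) := by rw [sub_self]; exact h2
    have := HasDerivAt.comp (h₂ := fun s => P (t + s)) (h := fun s : ℝ => s - t) t h3 ((hasDerivAt_id t).sub_const t)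
    simpa [Function.comp_def] using this
  have hGd : HasDerivAt G (∫ x : sphere (0 : Euc n) 1, (n+1) * (-(u x / H x)^2 * (bmat n H x).det + u x / H x * ((bmat n H x).adjugate * bmat n u x).trace) ∂sphMeasure n) 0 := by
    have hne : ∀ t, |t - 0| ≤ δ / 2 → ∀ x : sphere (0 : Euc n) 1, H x + t * u x ≠ 0 := fun t ht x =>
      ((hb t (by rw [sub_zero] at ht; linarith)).pos x).ne'
    have := sph_deriv n (fun t x => (n+1) * (u x / (H x + t * u x) * (bmat n H x + t • bmat n u x).det))
      (fun t x => (n+1) * (-(u x / (H x + t * u x))^2 * (bmat n H x + t • bmat n u x).det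
         + u x / (H x + t * u x) * ((bmat n H x + t • bmat n u x).adjugate * bmat n u x).trace)) 0 (δ/2) (by positivity)
      (fun t ht => continuous_const.mul ((c1.div (c0.add (continuous_const.mul c1)) (hne t ht)).mul
        ((det_cont2 h.toHom1 hu).comp (by fun_prop : Continuous fun x : sphere (0 : Euc n) 1 => (t, x)))))
      (by
        have k0 := c0.comp (continuous_snd (X := ℝ) (Y := sphere (0 : Euc n) 1))
        have k1 := c1.comp (continuous_snd (X := ℝ) (Y := sphere (0 : Euc n) 1))
        have kq : ContinuousOn (fun z : ℝ × sphere (0 : Euc n) 1 => u z.2 / (H z.2 + z.1 * u z.2)) (Set.Icc (0 - δ/2) (0 + δ/2) ×ˢ Set.univ) :=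
          ContinuousOn.div k1.continuousOn (k0.add (continuous_fst.mul k1)).continuousOn (fun z hz => hne z.1 (by
            rw [sub_zero, abs_le]; constructor <;> linarith [hz.1.1, hz.1.2]) z.2)
        exact continuousOn_const.mul (((kq.pow 2).neg.mul (det_cont2 h.toHom1 hu).continuousOn).add (kq.mul (T_cont h.toHom1 hu).continuousOn)))
      (fun t ht x => by
        have a : HasDerivAt (fun t : ℝ => H x + t * u x) (u x) t := by
          simpa using ((hasDerivAt_id t).mul_const (u x)).const_add (H x)
        have b := (hasDerivAt_const t (u x)).div a (hne t ht x)
        have c := (b.mul (det_hasDeriv _ _ t (h.det_ptne hu (hb t (by rw [sub_zero] at ht; linarith)) x))).const_mul ((n:ℝ)+1)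
        refine c.congr_deriv ?_
        have := hne t ht x
        simp only [Pi.div_apply]
        field_simp
        ring)
    simpa using this
  have hG0 : G 0 = 0 := by
    simp only [hG, zero_mul, add_zero, zero_smul]
    rw [integral_const_mul, hz, mul_zero]
  have ev : ∀ᶠ t in nhds (0:ℝ), |t| < δ := by
    filter_upwards [Metric.ball_mem_nhds (0:ℝ) hδ] with t ht using by simpa using ht
  have P0 : P 0 = Vol n H := by simp [hP, Vol, pt_bmat h.toHom1 hu]
  set γ := ∫ x : sphere (0 : Euc n) 1, (n+1) * (-(u x / H x)^2 * (bmat n H x).det + u x / H x * ((bmat n H x).adjugate * bmat n u x).trace) ∂sphMeasure n with hγ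
  have nd : ∀ (f : ℝ → ℝ) (f' t : ℝ), HasDerivAt f f' (-t) → HasDerivAt (fun t => f (-t)) (-f') t := by
    intro f f' t hf
    have := hf.comp t (hasDerivAt_neg t)
    simpa [Function.comp_def] using this
  have hc := second_test (fun t => P t * P (-t)) (fun t => G t * P (-t) + P t * (-G (-t))) (2 * γ * P 0) (by
      filter_upwards [ev] with t ht
      exact (hPd t ht).mul (nd P _ t (hPd (-t) (by simpa using ht)))) (by
      have p0 := hPd 0 (by simpa using hδ)
      have p0' := nd P _ 0 (by simpa using p0)
      have g0' := (nd G _ 0 (by simpa using hGd)).neg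
      refine ((hGd.mul p0').add (p0.mul g0')).congr_deriv ?_
      simp only [hG0, neg_zero, Pi.neg_apply]
      ring) (by
      filter_upwards [ev] with t ht
      have h1 := h.bm (hb t ht) (hb (-t) (by simpa using ht)) (fun x => by simp only [_root_.pt]; ring)
      simp only [neg_zero, P0]
      rw [← pow_two]; exact h1)
  rw [P0] at hc
  have hv := h.vol_pos
  have hγ0 : γ ≤ 0 := by nlinarith
  have cf : Continuous fun x : sphere (0 : Euc n) 1 => u x / H x := c1.div c0 fun x => (h.pos x).ne'
  have cT : Continuous fun x : sphere (0 : Euc n) 1 => ((bmat n H x).adjugate * bmat n u x).trace :=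
    (h.s.bmat_cont'.matrix_adjugate.matrix_mul hu.s.bmat_cont').matrix_trace
  have i1 : Integrable (fun x : sphere (0 : Euc n) 1 => - ((u x / H x) ^ 2 * (bmat n H x).det)) (sphMeasure n) :=
    sph_integrable ((cf.pow 2).mul h.s.det_cont).neg
  have i2 : Integrable (fun x : sphere (0 : Euc n) 1 => u x / H x * ((bmat n H x).adjugate * bmat n u x).trace) (sphMeasure n) :=
    sph_integrable (cf.mul cT)
  have e : γ = (n+1) * (- ∫ x : sphere (0 : Euc n) 1, (u x / H x) ^ 2 * (bmat n H x).det ∂sphMeasure n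
      + ∫ x : sphere (0 : Euc n) 1, u x / H x * ((bmat n H x).adjugate * bmat n u x).trace ∂sphMeasure n) := by
    rw [hγ, integral_const_mul, ← integral_neg, ← integral_add i1 i2]
    congr 1
    refine integral_congr_ae (Filter.Eventually.of_forall fun x => ?_)
    simp only []; ring
  rw [e] at hγ0
  have hn : (0:ℝ) < n + 1 := by positivity
  nlinarith
end pert


section poin
variable {n : ℕ} {H u : Euc n → ℝ}

lemma int3 {a b c : sphere (0 : Euc n) 1 → ℝ} (ha : Integrable a (sphMeasure n)) (hb : Integrable b (sphMeasure n))
    (hc : Integrable c (sphMeasure n)) : ∫ x, (a x - b x + c x) ∂sphMeasure n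
      = ∫ x, a x ∂sphMeasure n - ∫ x, b x ∂sphMeasure n + ∫ x, c x ∂sphMeasure n := by
  rw [← integral_sub ha hb]
  exact integral_add (ha.sub hb) hc

lemma ehess_mul {a b : Euc n → ℝ} (ha : Sm n a) (hb : Sm n b) {x : Euc n} (hx : x ≠ 0) (i j : Fin (n+1)) :
    ehess n (fun y => a y * b y) x i j = a x * ehess n b x i j + b x * ehess n a x i j
      + fderiv ℝ a x (EuclideanSpace.single i 1) * fderiv ℝ b x (EuclideanSpace.single j 1)
      + fderiv ℝ a x (EuclideanSpace.single j 1) * fderiv ℝ b x (EuclideanSpace.single i 1) := by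
  set ei : Euc n := EuclideanSpace.single i 1
  set ej : Euc n := EuclideanSpace.single j 1
  have h1 : (fun y => fderiv ℝ (fun y => a y * b y) y ej) =ᶠ[nhds x]
      fun y => a y * fderiv ℝ b y ej + b y * fderiv ℝ a y ej := by
    filter_upwards [ne_nhds hx] with y hy
    have : fderiv ℝ (fun y => a y * b y) y = _ := ((ha.diff hy).hasFDerivAt.mul (hb.diff hy).hasFDerivAt).fderiv
    rw [this]; simp
  have dA : HasFDerivAt (fun y => fderiv ℝ a y ej) (fderiv ℝ (fun y => fderiv ℝ a y ej) x) x :=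
    ((ha.fder.diff hx).clm_apply (differentiableAt_const ej)).hasFDerivAt
  have dB : HasFDerivAt (fun y => fderiv ℝ b y ej) (fderiv ℝ (fun y => fderiv ℝ b y ej) x) x :=
    ((hb.fder.diff hx).clm_apply (differentiableAt_const ej)).hasFDerivAt
  have h2 := ((ha.diff hx).hasFDerivAt.mul dB).add ((hb.diff hx).hasFDerivAt.mul dA)
  simp only [ehess, Matrix.of_apply]
  rw [h1.fderiv_eq]
  have h3 : fderiv ℝ (fun y => a y * fderiv ℝ b y ej + b y * fderiv ℝ a y ej) x = _ := h2.fderiv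
  rw [h3]
  simp [ei, ej]
  ring

lemma Hom1.zero (h : Hom1 n H) : H 0 = 0 := by
  have := h.hom 2 (by norm_num) 0
  simp at this; linarith

structure Hom0 (n : ℕ) (f : Euc n → ℝ) : Prop where
  hom : ∀ c : ℝ, 0 < c → ∀ x : Euc n, x ≠ 0 → f (c • x) = f x
  s : Sm n f

lemma Hom0.mul (hf : Hom0 n u) (h : Hom1 n H) : Hom1 n (fun y => u y * H y) where
  hom c hc x := by
    by_cases hx : x = 0
    · subst hx; simp [h.zero]
    · simp only [hf.hom c hc x hx, h.hom c hc]; ring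
  sm := ContDiffOn.mul hf.s h.sm

lemma bmat_sq {f : Euc n → ℝ} (hf : Hom0 n f) (h : Hom1 n H) (x : sphere (0 : Euc n) 1) :
    bmat n (fun y => f y * (f y * H y)) x = (2 * f x) • bmat n (fun y => f y * H y) x - (f x ^ 2) • bmat n H x
      + (2 * H x) • Matrix.vecMulVec (gradient f (x : Euc n)).ofLp (gradient f (x : Euc n)).ofLp := by
  have hg : ∀ k, gradient f (x : Euc n) k = fderiv ℝ f x (EuclideanSpace.single k 1) := by
    intro k; rw [← grad_inner, EuclideanSpace.inner_single_right]; simp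
  have hm : fderiv ℝ (fun y => f y * H y) (x : Euc n) = f x • fderiv ℝ H x + H x • fderiv ℝ f x :=
    ((hf.s.diff (sph_ne x)).hasFDerivAt.mul (h.s.diff (sph_ne x)).hasFDerivAt).fderiv
  ext i j
  simp only [bmat, Matrix.add_apply, Matrix.sub_apply, Matrix.smul_apply, Matrix.of_apply, Matrix.vecMulVec_apply, smul_eq_mul, hg]
  rw [ehess_mul hf.s (hf.mul h).s (sph_ne x), ehess_mul hf.s h.s (sph_ne x), hm]
  simp
  ring

lemma trace_vecMul (A : Matrix (Fin (n+1)) (Fin (n+1)) ℝ) (g : Fin (n+1) → ℝ) :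
    (A * Matrix.vecMulVec g g).trace = g ⬝ᵥ (A *ᵥ g) := by
  rw [Matrix.mul_vecMulVec, Matrix.trace_vecMulVec, dotProduct_comm]

lemma Body.poin0 (h : Body n H) {f : Euc n → ℝ} (hf : Hom0 n f)
    (hz : ∫ x : sphere (0 : Euc n) 1, f x * (bmat n H x).det ∂sphMeasure n = 0) :
    n * ∫ x : sphere (0 : Euc n) 1, f x ^ 2 * (bmat n H x).det ∂sphMeasure n
      ≤ ∫ x : sphere (0 : Euc n) 1, H x * ((gradient f (x : Euc n)).ofLp ⬝ᵥ ((bmat n H x).adjugate *ᵥ (gradient f (x : Euc n)).ofLp)) ∂sphMeasure n := by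
  have hu := hf.mul h.toHom1
  have hw := hf.mul hu
  have e1 : ∀ x : sphere (0 : Euc n) 1, f x * H x / H x = f x := fun x => mul_div_cancel_right₀ _ (h.pos x).ne'
  have e2 : ∀ x : sphere (0 : Euc n) 1, f x * (f x * H x) / H x = f x ^ 2 := fun x => by
    rw [← mul_assoc, mul_div_cancel_right₀ _ (h.pos x).ne', pow_two]
  have h1 := h.second hu (by simp_rw [e1]; exact hz)
  have h2 := h.lemL hw
  simp_rw [e1] at h1
  simp_rw [e2] at h2
  have e3 : ∀ x : sphere (0 : Euc n) 1, ((bmat n H x).adjugate * bmat n (fun y => f y * (f y * H y)) x).trace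
      = 2 * (f x * ((bmat n H x).adjugate * bmat n (fun y => f y * H y) x).trace) - (n+1) * (f x ^ 2 * (bmat n H x).det)
        + 2 * (H x * ((gradient f (x : Euc n)).ofLp ⬝ᵥ ((bmat n H x).adjugate *ᵥ (gradient f (x : Euc n)).ofLp))) := by
    intro x
    rw [bmat_sq hf h.toHom1 x, mul_add, mul_sub, Matrix.mul_smul, Matrix.mul_smul, Matrix.mul_smul, Matrix.adjugate_mul,
      Matrix.trace_add, Matrix.trace_sub, Matrix.trace_smul, Matrix.trace_smul, Matrix.trace_smul, Matrix.trace_smul, trace_vecMul, Matrix.trace_one]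
    simp
    ring
  simp_rw [e3] at h2
  have cf := hf.s.sph
  have cH := h.s.sph
  have cg : Continuous fun x : sphere (0 : Euc n) 1 => (gradient f (x : Euc n)).ofLp :=
    (PiLp.continuous_ofLp 2 _).comp hf.s.grad.sph
  have cA := h.s.bmat_cont'.matrix_adjugate
  have cu := hu.s.bmat_cont'
  have i1 : Integrable (fun x : sphere (0 : Euc n) 1 => 2 * (f x * ((bmat n H x).adjugate * bmat n (fun y => f y * H y) x).trace)) (sphMeasure n) :=
    sph_integrable (continuous_const.mul (cf.mul (cA.matrix_mul cu).matrix_trace))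
  have i2 : Integrable (fun x : sphere (0 : Euc n) 1 => ((n:ℝ)+1) * (f x ^ 2 * (bmat n H x).det)) (sphMeasure n) :=
    sph_integrable (continuous_const.mul ((cf.pow 2).mul h.s.det_cont))
  have i3 : Integrable (fun x : sphere (0 : Euc n) 1 => 2 * (H x * ((gradient f (x : Euc n)).ofLp ⬝ᵥ ((bmat n H x).adjugate *ᵥ (gradient f (x : Euc n)).ofLp)))) (sphMeasure n) :=
    sph_integrable (continuous_const.mul (cH.mul (cg.dotProduct (cA.matrix_mulVec cg))))
  rw [int3 i1 i2 i3, integral_const_mul, integral_const_mul, integral_const_mul] at h2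
  linarith

lemma Body.poin (h : Body n H) {f : Euc n → ℝ} (hf : Hom0 n f) (w : sphere (0 : Euc n) 1 → Euc n)
    (hw : ∀ x : sphere (0 : Euc n) 1, gradient f (x : Euc n) = Hs n H x (w x)) :
    n * (∫ x : sphere (0 : Euc n) 1, f x ^ 2 * (bmat n H x).det ∂sphMeasure n
        - (∫ x : sphere (0 : Euc n) 1, f x * (bmat n H x).det ∂sphMeasure n) ^ 2 / Vol n H)
      ≤ ∫ x : sphere (0 : Euc n) 1, H x * ((bmat n H x).det * ⟪Hs n H x (w x), w x⟫) ∂sphMeasure n := by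
  have hV := h.vol_pos
  set m : ℝ := (∫ x : sphere (0 : Euc n) 1, f x * (bmat n H x).det ∂sphMeasure n) / Vol n H with hm
  set F : Euc n → ℝ := fun y => f y - m with hF
  have hF0 : Hom0 n F := ⟨fun c hc x hx => by simp only [hF, hf.hom c hc x hx], ContDiffOn.sub hf.s contDiffOn_const⟩
  have cf := hf.s.sph
  have cd := h.s.det_cont
  have i1 : Integrable (fun x : sphere (0 : Euc n) 1 => f x * (bmat n H x).det) (sphMeasure n) := sph_integrable (cf.mul cd)
  have i0 : Integrable (fun x : sphere (0 : Euc n) 1 => (bmat n H x).det) (sphMeasure n) := sph_integrable cd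
  have i2 : Integrable (fun x : sphere (0 : Euc n) 1 => f x ^ 2 * (bmat n H x).det) (sphMeasure n) := sph_integrable ((cf.pow 2).mul cd)
  have hz : ∫ x : sphere (0 : Euc n) 1, F x * (bmat n H x).det ∂sphMeasure n = 0 := by
    simp only [hF, sub_mul]
    rw [integral_sub i1 (i0.const_mul m), integral_const_mul]
    change _ - m * Vol n H = 0
    rw [hm]; field_simp; ring
  have h1 := h.poin0 hF0 hz
  have e1 : ∫ x : sphere (0 : Euc n) 1, F x ^ 2 * (bmat n H x).det ∂sphMeasure n
      = ∫ x : sphere (0 : Euc n) 1, f x ^ 2 * (bmat n H x).det ∂sphMeasure n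
        - (∫ x : sphere (0 : Euc n) 1, f x * (bmat n H x).det ∂sphMeasure n) ^ 2 / Vol n H := by
    have : ∀ x : sphere (0 : Euc n) 1, F x ^ 2 * (bmat n H x).det = f x ^ 2 * (bmat n H x).det
        - 2 * m * (f x * (bmat n H x).det) + m ^ 2 * (bmat n H x).det := by
      intro x; simp only [hF]; ring
    simp_rw [this]
    rw [int3 i2 (i1.const_mul _) (i0.const_mul _), integral_const_mul, integral_const_mul]
    change _ + m^2 * Vol n H = _
    rw [hm]; field_simp; ring
  rw [e1] at h1
  refine h1.trans (le_of_eq ?_)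
  refine integral_congr_ae (Filter.Eventually.of_forall fun x => ?_)
  simp only []
  congr 1
  have hg : gradient F (x : Euc n) = gradient f x := by
    simp only [gradient, hF, fderiv_sub_const]
  rw [hg]
  set w' : Euc n := w x - ⟪(x : Euc n), w x⟫ • (x : Euc n) with hw'
  have hxx : ⟪(x : Euc n), (x : Euc n)⟫ = 1 := by rw [real_inner_self_eq_norm_sq, sph_norm]; simp
  have hxw : ⟪(x : Euc n), w'⟫ = 0 := by
    rw [hw', inner_sub_right, inner_smul_right, hxx]; ring
  have h3 : Hs n H x w' = Hs n H x (w x) := by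
    rw [hw', map_sub, map_smul, h.hs_self (sph_ne x)]; simp
  have h4 : ⟪Hs n H x (w x), w'⟫ = ⟪Hs n H x (w x), w x⟫ := by
    rw [hw', inner_sub_right, inner_smul_right, h.s.hs_symm (sph_ne x) (w x) x, h.hs_self (sph_ne x)]; simp
  have h5 : (gradient f (x : Euc n)).ofLp = bmat n H x *ᵥ (w' : Fin (n+1) → ℝ) := by
    ext i
    rw [h.s.bmat_mulVec (sph_ne x), hxw, h3, hw]; simp
  have h6 : (bmat n H x).adjugate *ᵥ (gradient f (x : Euc n)).ofLp = (bmat n H x).det • (w' : Fin (n+1) → ℝ) := by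
    rw [h5, Matrix.mulVec_mulVec, Matrix.adjugate_mul, Matrix.smul_mulVec, Matrix.one_mulVec]
  rw [h6, dotProduct_smul, smul_eq_mul, ← h4, euc_inner, hw, dotProduct]
end poin


section fin
variable {n : ℕ} {H : Euc n → ℝ}

def Ra (H : Euc n → ℝ) (α : ℝ) (y : Euc n) : ℝ := ‖gradient H y‖ ^ α

def fk (H : Euc n → ℝ) (α : ℝ) (k : Fin (n+1)) (y : Euc n) : ℝ := Ra H α y * gradient H y k

def wk (H : Euc n → ℝ) (α : ℝ) (k : Fin (n+1)) (y : Euc n) : Euc n :=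
  Ra H α y • EuclideanSpace.single k 1 + (α * Ra H α y * gradient H y k / ‖gradient H y‖ ^ 2) • gradient H y

lemma Body.grad_ne' (h : Body n H) {y : Euc n} (hy : y ≠ 0) : gradient H y ≠ 0 := by
  intro h0
  have := h.euler hy
  rw [h0, inner_zero_left] at this
  exact (h.posne hy).ne this

lemma Body.Ra_pos (h : Body n H) (α : ℝ) {y : Euc n} (hy : y ≠ 0) : 0 < Ra H α y :=
  Real.rpow_pos_of_pos (norm_pos_iff.2 (h.grad_ne' hy)) _

lemma Body.Ra_sm (h : Body n H) (α : ℝ) : Sm n (Ra H α) := by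
  intro y hy
  have h1 : ContDiffAt ℝ (⊤ : ℕ∞) (fun y => ‖gradient H y‖) y := (h.gr.cd hy).norm ℝ (h.grad_ne' hy)
  exact (h1.rpow_const_of_ne (by simpa using h.grad_ne' hy)).contDiffWithinAt

lemma sm_coord {F : Euc n → Euc n} (hF : Sm n F) (k : Fin (n+1)) : Sm n (fun y => F y k) :=
  (EuclideanSpace.proj (𝕜 := ℝ) k : Euc n →L[ℝ] ℝ).contDiff.comp_contDiffOn hF

lemma Body.fk_hom0 (h : Body n H) (α : ℝ) (k : Fin (n+1)) : Hom0 n (fk H α k) where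
  hom c hc x hx := by simp only [fk, Ra, h.grad_hom hc hx]
  s := ContDiffOn.mul (h.Ra_sm α) (sm_coord h.gr k)

lemma Body.Ra_deriv (h : Body n H) (α : ℝ) {y : Euc n} (hy : y ≠ 0) :
    HasFDerivAt (Ra H α) ((α * Ra H α y / ‖gradient H y‖ ^ 2) • (innerSL ℝ (gradient H y)).comp (Hs n H y)) y := by
  have hp := norm_pos_iff.2 (h.grad_ne' hy)
  have h1 : HasFDerivAt (fun y => ‖gradient H y‖) _ y :=
    (norm_hasFDerivAt (h.grad_ne' hy)).comp y (h.gr.diff hy).hasFDerivAt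
  have h2 : HasFDerivAt (fun y => ‖gradient H y‖ ^ α) _ y := h1.rpow_const (p := α) (Or.inl hp.ne')
  refine h2.congr_fderiv ?_
  ext v
  simp only [ContinuousLinearMap.comp_apply, _root_.smul_apply, smul_eq_mul, innerSL_apply_apply, Hs, Ra]
  rw [Real.rpow_sub_one hp.ne']
  field_simp

lemma Body.fk_grad (h : Body n H) (α : ℝ) (k : Fin (n+1)) {y : Euc n} (hy : y ≠ 0) :
    gradient (fk H α k) y = Hs n H y (wk H α k y) := by
  have h1 : HasFDerivAt (fun y => gradient H y k) ((EuclideanSpace.proj (𝕜 := ℝ) k : Euc n →L[ℝ] ℝ).comp (Hs n H y)) y :=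
    (EuclideanSpace.proj (𝕜 := ℝ) k : Euc n →L[ℝ] ℝ).hasFDerivAt.comp y (h.gr.diff hy).hasFDerivAt
  have h2 : fderiv ℝ (fk H α k) y = _ := ((h.Ra_deriv α hy).mul h1).fderiv
  refine ext_inner_right ℝ fun v => ?_
  rw [grad_inner, h2, h.s.hs_symm hy, wk, inner_add_left, inner_smul_left, inner_smul_left, EuclideanSpace.inner_single_left]
  simp
  ring

lemma Body.hs_nonneg (h : Body n H) (x : sphere (0 : Euc n) 1) (v : Euc n) : 0 ≤ ⟪Hs n H x v, v⟫ := by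
  by_cases hv : ∀ c : ℝ, v ≠ c • (x : Euc n)
  · exact (h.hs_pos_sph x v hv).le
  · push Not at hv
    obtain ⟨c, rfl⟩ := hv
    rw [map_smul, h.hs_self (sph_ne x)]; simp

def trH (H : Euc n → ℝ) (x : Euc n) : ℝ := ∑ k, Hs n H x (EuclideanSpace.single k 1) k

lemma sum_wk (h : Body n H) (α : ℝ) (x : sphere (0 : Euc n) 1) :
    ∑ k, ⟪Hs n H x (wk H α k x), wk H α k x⟫ = Ra H α x ^ 2 * trH H x
      + (2 * α + α ^ 2) * (Ra H α x ^ 2 * ⟪Hs n H x (gradient H x), gradient H x⟫ / ‖gradient H x‖ ^ 2) := by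
  set X := gradient H (x : Euc n) with hX
  have hp := norm_pos_iff.2 (h.grad_ne x)
  rw [← hX] at hp
  set R := Ra H α x
  set Q := ⟪Hs n H x X, X⟫ with hQ
  have h1 : ∀ k, ⟪Hs n H x (wk H α k x), wk H α k x⟫ = R ^ 2 * Hs n H x (EuclideanSpace.single k 1) k
      + 2 * α * R ^ 2 / ‖X‖ ^ 2 * (Hs n H x X k * X k) + α ^ 2 * R ^ 2 * Q / ‖X‖ ^ 4 * (X k * X k) := by
    intro k
    have a1 : ⟪Hs n H x (EuclideanSpace.single k 1), (EuclideanSpace.single k 1 : Euc n)⟫ = Hs n H x (EuclideanSpace.single k 1) k := by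
      rw [EuclideanSpace.inner_single_right]; simp
    have a2 : ⟪Hs n H x X, (EuclideanSpace.single k 1 : Euc n)⟫ = Hs n H x X k := by
      rw [EuclideanSpace.inner_single_right]; simp
    have a3 : ⟪Hs n H x (EuclideanSpace.single k 1), X⟫ = Hs n H x X k := by
      rw [h.s.hs_symm (sph_ne x), EuclideanSpace.inner_single_left]; simp
    simp only [wk]
    rw [← hX, map_add, map_smul, map_smul, inner_add_left, inner_add_right, inner_add_right]
    simp only [inner_smul_left, inner_smul_right, a1, a2, a3, conj_trivial]
    rw [← hQ]
    rw [show Ra H α (x : Euc n) = R from rfl]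
    field_simp
    ring
  simp_rw [h1]
  rw [Finset.sum_add_distrib, Finset.sum_add_distrib, ← Finset.mul_sum, ← Finset.mul_sum, ← Finset.mul_sum, ← euc_inner, ← euc_inner, real_inner_self_eq_norm_sq, ← hQ, trH]
  field_simp
  ring

lemma H_rpow_deriv (h : Body n H) (e : ℝ) {y : Euc n} (hy : y ≠ 0) :
    HasFDerivAt (fun y => H y ^ e) ((e * H y ^ (e-1)) • fderiv ℝ H y) y :=
  (h.s.diff hy).hasFDerivAt.rpow_const (Or.inl (h.posne hy).ne')

lemma H_rpow_sm (h : Body n H) (e : ℝ) : Sm n (fun y => H y ^ e) := by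
  intro y hy
  exact ((h.s.cd hy).rpow_const_of_ne (h.posne hy).ne').contDiffWithinAt

lemma grad_coord (u : Euc n → ℝ) (x : Euc n) (k : Fin (n+1)) : fderiv ℝ u x (EuclideanSpace.single k 1) = gradient u x k := by
  rw [← grad_inner, EuclideanSpace.inner_single_right]; simp

/-- first divergence identity -/
lemma div1 (h : Body n H) (p : ℝ) (i : Fin (n+1)) :
    (p+1) * ∫ x : sphere (0 : Euc n) 1, H x ^ p * gradient H x i ∂sphMeasure n
      = (p+1+n) * ∫ x : sphere (0 : Euc n) 1, H x ^ (p+1) * (x : Euc n) i ∂sphMeasure n := by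
  rw [← sph_div n (fun y => H y ^ (p+1)) (p+1) i (H_rpow_sm h _) (fun s hs x hx => by
    rw [h.hom s hs, Real.mul_rpow hs.le (h.posne hx).le]), ← integral_const_mul]
  refine integral_congr_ae (Filter.Eventually.of_forall fun x => ?_)
  simp only []
  rw [(H_rpow_deriv h (p+1) (sph_ne x)).fderiv, _root_.smul_apply, grad_coord, smul_eq_mul, add_sub_cancel_right, mul_assoc]

lemma Body.fk_deriv (h : Body n H) (α : ℝ) (x : sphere (0 : Euc n) 1) :
    ∑ i, fderiv ℝ (fk H α i) x (EuclideanSpace.single i 1) = Ra H α x * trH H x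
      + α * (Ra H α x * ⟪Hs n H x (gradient H x), gradient H x⟫ / ‖gradient H x‖ ^ 2) := by
  set X := gradient H (x : Euc n) with hX
  have hp := norm_pos_iff.2 (h.grad_ne x)
  rw [← hX] at hp
  have h1 : ∀ i, fderiv ℝ (fk H α i) x (EuclideanSpace.single i 1) = Ra H α x * Hs n H x (EuclideanSpace.single i 1) i
      + α * Ra H α x / ‖X‖ ^ 2 * (Hs n H x X i * X i) := by
    intro i
    rw [grad_coord, h.fk_grad α i (sph_ne x), wk, map_add, map_smul, map_smul]
    simp only [PiLp.add_apply, PiLp.smul_apply, smul_eq_mul, ← hX]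
    ring
  simp_rw [h1]
  rw [Finset.sum_add_distrib, ← Finset.mul_sum, ← Finset.mul_sum, ← euc_inner, trH]
  ring

/-- second divergence identity -/
lemma div2 (h : Body n H) (p α : ℝ) :
    ∫ x : sphere (0 : Euc n) 1, ((p+1) * (H x ^ p * Ra H α x * ‖gradient H x‖ ^ 2)
      + (H x ^ (p+1) * Ra H α x * trH H x + α * (H x ^ (p+1) * (Ra H α x * ⟪Hs n H x (gradient H x), gradient H x⟫ / ‖gradient H x‖ ^ 2)))) ∂sphMeasure n
     = (p+1+n) * ∫ x : sphere (0 : Euc n) 1, H x ^ (p+2) * Ra H α x ∂sphMeasure n := by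
  have hW : ∀ i, Sm n (fun y => H y ^ (p+1) * fk H α i y) := fun i => ContDiffOn.mul (H_rpow_sm h _) (h.fk_hom0 α i).s
  have h0 : ∀ i : Fin (n+1), _ := fun i => sph_div n (fun y => H y ^ (p+1) * fk H α i y) (p+1) i (hW i) (fun s hs x hx => by
    rw [h.hom s hs, Real.mul_rpow hs.le (h.posne hx).le, (h.fk_hom0 α i).hom s hs x hx, mul_assoc])
  have hs := Finset.sum_congr rfl (fun (i : Fin (n+1)) (_ : i ∈ Finset.univ) => h0 i)
  rw [← Finset.mul_sum, ← integral_finsetSum, ← integral_finsetSum] at hs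
  · have l : ∀ x : sphere (0 : Euc n) 1, ∑ i, fderiv ℝ (fun y => H y ^ (p+1) * fk H α i y) x (EuclideanSpace.single i 1)
       = ((p+1) * (H x ^ p * Ra H α x * ‖gradient H x‖ ^ 2)
      + (H x ^ (p+1) * Ra H α x * trH H x + α * (H x ^ (p+1) * (Ra H α x * ⟪Hs n H x (gradient H x), gradient H x⟫ / ‖gradient H x‖ ^ 2)))) := by
      intro x
      have a : ∀ i, fderiv ℝ (fun y => H y ^ (p+1) * fk H α i y) x (EuclideanSpace.single i 1)
          = (p+1) * H x ^ p * Ra H α x * (gradient H x i * gradient H x i) + H x ^ (p+1) * fderiv ℝ (fk H α i) x (EuclideanSpace.single i 1) := by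
        intro i
        have b : fderiv ℝ (fun y => H y ^ (p+1) * fk H α i y) (x : Euc n) = _ :=
          ((H_rpow_deriv h (p+1) (sph_ne x)).mul ((h.fk_hom0 α i).s.diff (sph_ne x)).hasFDerivAt).fderiv
        rw [b]
        simp only [_root_.add_apply, _root_.smul_apply, smul_eq_mul, add_sub_cancel_right]
        rw [grad_coord H, fk]
        ring
      simp_rw [a]
      rw [Finset.sum_add_distrib, ← Finset.mul_sum, ← Finset.mul_sum, ← euc_inner, real_inner_self_eq_norm_sq, h.fk_deriv]
      ring
    have r : ∀ x : sphere (0 : Euc n) 1, ∑ i, H x ^ (p+1) * fk H α i x * (x : Euc n) i = H x ^ (p+2) * Ra H α x := by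
      intro x
      have : ∀ i, H x ^ (p+1) * fk H α i x * (x : Euc n) i = H x ^ (p+1) * Ra H α x * (gradient H x i * (x : Euc n) i) := by
        intro i; rw [fk]; ring
      simp_rw [this]
      rw [← Finset.mul_sum, ← euc_inner, h.euler (sph_ne x), show p + 2 = p + 1 + 1 by ring, Real.rpow_add_one (h.pos x).ne' (p+1)]
      ring
    simp_rw [l, r] at hs
    exact hs
  · intro i _
    exact sph_integrable (((hW i).sph).mul (cont_coord n i))
  · intro i _
    exact sph_integrable ((hW i).fder.sph.clm_apply continuous_const)

lemma sphGrad_eq (h : Body n H) (x : sphere (0 : Euc n) 1) :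
    sphGrad n H x = gradient H x - H x • (x : Euc n) := by
  have e : (fun y => H (‖y‖⁻¹ • y)) =ᶠ[nhds (x : Euc n)] fun y => ‖y‖⁻¹ * H y := by
    filter_upwards [ne_nhds (sph_ne x)] with y hy
    exact h.hom _ (inv_pos.2 (norm_pos_iff.2 hy)) y
  have h1 : HasFDerivAt (fun y : Euc n => ‖y‖⁻¹) _ (x : Euc n) := (hasDerivAt_inv (norm_ne_zero_iff.2 (sph_ne x))).comp_hasFDerivAt (x : Euc n) (norm_hasFDerivAt (sph_ne x))
  have h2 := h1.mul (h.s.diff (sph_ne x)).hasFDerivAt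
  refine ext_inner_right ℝ fun v => ?_
  rw [sphGrad, grad_inner, e.fderiv_eq]
  have h3 : fderiv ℝ (fun y => ‖y‖⁻¹ * H y) (x : Euc n) = _ := h2.fderiv
  rw [h3, inner_sub_left, grad_inner, inner_smul_left]
  simp
  ring
end fin


section fin2
variable {n : ℕ} {H : Euc n → ℝ}

lemma Body.cH (h : Body n H) (e : ℝ) : Continuous fun x : sphere (0 : Euc n) 1 => H x ^ e := (H_rpow_sm h e).sph
lemma Body.cR (h : Body n H) (α : ℝ) : Continuous fun x : sphere (0 : Euc n) 1 => Ra H α x := (h.Ra_sm α).sph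
lemma Body.cX (h : Body n H) : Continuous fun x : sphere (0 : Euc n) 1 => gradient H (x : Euc n) := h.gr.sph
lemma Body.cHs (h : Body n H) : Continuous fun x : sphere (0 : Euc n) 1 => Hs n H (x : Euc n) := h.hs.sph
lemma Body.cXi (h : Body n H) (i) : Continuous fun x : sphere (0 : Euc n) 1 => gradient H (x : Euc n) i :=
  (sm_coord h.gr i).sph

lemma Body.cTr (h : Body n H) : Continuous fun x : sphere (0 : Euc n) 1 => trH H (x : Euc n) := by
  unfold trH
  refine continuous_finsetSum _ fun k _ => ?_
  exact (EuclideanSpace.proj (𝕜 := ℝ) k : Euc n →L[ℝ] ℝ).continuous.comp (h.cHs.clm_apply continuous_const)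

def Qr (H : Euc n → ℝ) (α : ℝ) (x : Euc n) : ℝ :=
  Ra H α x * ⟪Hs n H x (gradient H x), gradient H x⟫ / ‖gradient H x‖ ^ 2

lemma Body.cQ (h : Body n H) (α : ℝ) : Continuous fun x : sphere (0 : Euc n) 1 => Qr H α (x : Euc n) := by
  unfold Qr
  refine ((h.cR α).mul ((h.cHs.clm_apply h.cX).inner h.cX)).div (h.cX.norm.pow 2) fun x => ?_
  exact pow_ne_zero _ (norm_ne_zero_iff.2 (h.grad_ne x))

lemma keyJ (h : Body n H) (p α : ℝ) (hα0 : α ≤ 0) (hα1 : -1 ≤ α)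
    (hd : ∀ x : sphere (0 : Euc n) 1, (bmat n H x).det = H x ^ p * (Ra H α x)⁻¹) :
    (p+1+n) * (∫ x : sphere (0 : Euc n) 1, H x ^ p * Ra H α x * ‖gradient H x‖ ^ 2 ∂sphMeasure n
       - ∫ x : sphere (0 : Euc n) 1, H x ^ (p+2) * Ra H α x ∂sphMeasure n)
     ≤ n * ((∑ k, (∫ x : sphere (0 : Euc n) 1, H x ^ p * gradient H x k ∂sphMeasure n) ^ 2) / Vol n H) := by
  have hR : ∀ x : sphere (0 : Euc n) 1, Ra H α x ≠ 0 := fun x => (h.Ra_pos α (sph_ne x)).ne'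
  have hk : ∀ k ∈ Finset.univ, _ := fun k (_ : k ∈ Finset.univ) => h.poin (h.fk_hom0 α k) (fun x => wk H α k x) (fun x => h.fk_grad α k (sph_ne x))
  have hs := Finset.sum_le_sum hk
  rw [← Finset.mul_sum, Finset.sum_sub_distrib, ← Finset.sum_div, ← integral_finsetSum, ← integral_finsetSum] at hs
  · have e1 : ∀ x : sphere (0 : Euc n) 1, ∑ k, fk H α k x ^ 2 * (bmat n H x).det = H x ^ p * Ra H α x * ‖gradient H x‖ ^ 2 := by
      intro x
      have := hR x
      rw [← real_inner_self_eq_norm_sq, euc_inner, Finset.mul_sum]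
      refine Finset.sum_congr rfl fun k _ => ?_
      rw [hd, fk]; field_simp
    have e2 : ∀ k, ∀ x : sphere (0 : Euc n) 1, fk H α k x * (bmat n H x).det = H x ^ p * gradient H x k := by
      intro k x
      have := hR x
      rw [hd, fk]; field_simp
    have e3 : ∀ x : sphere (0 : Euc n) 1, ∑ k, H x * ((bmat n H x).det * ⟪Hs n H x (wk H α k x), wk H α k x⟫)
        = H x ^ (p+1) * Ra H α x * trH H x + (2 * α + α ^ 2) * (H x ^ (p+1) * Qr H α x) := by
      intro x
      have := hR x
      rw [← Finset.mul_sum, ← Finset.mul_sum, sum_wk h, hd, Real.rpow_add_one (h.pos x).ne', Qr]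
      have hp := norm_pos_iff.2 (h.grad_ne x)
      field_simp
    simp_rw [e1, e2, e3] at hs
    have d2 := div2 h p α
    change ∫ x : sphere (0 : Euc n) 1, ((p+1) * (H x ^ p * Ra H α x * ‖gradient H x‖ ^ 2)
      + (H x ^ (p+1) * Ra H α x * trH H x + α * (H x ^ (p+1) * Qr H α x))) ∂sphMeasure n = _ at d2
    have i1 : Integrable (fun x : sphere (0 : Euc n) 1 => H x ^ p * Ra H α x * ‖gradient H x‖ ^ 2) (sphMeasure n) :=
      sph_integrable (((h.cH p).mul (h.cR α)).mul (h.cX.norm.pow 2))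
    have i2 : Integrable (fun x : sphere (0 : Euc n) 1 => H x ^ (p+1) * Ra H α x * trH H x) (sphMeasure n) :=
      sph_integrable (((h.cH _).mul (h.cR α)).mul h.cTr)
    have i3 : Integrable (fun x : sphere (0 : Euc n) 1 => H x ^ (p+1) * Qr H α x) (sphMeasure n) :=
      sph_integrable ((h.cH _).mul (h.cQ α))
    have i4 : Integrable (fun x : sphere (0 : Euc n) 1 => H x ^ (p+1) * Ra H α x * trH H x + α * (H x ^ (p+1) * Qr H α x)) (sphMeasure n) :=
      i2.add (i3.const_mul _)
    rw [integral_add (i1.const_mul _) i4, integral_add i2 (i3.const_mul _), integral_const_mul, integral_const_mul] at d2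
    rw [integral_add i2 (i3.const_mul _), integral_const_mul] at hs
    have hq : 0 ≤ ∫ x : sphere (0 : Euc n) 1, H x ^ (p+1) * Qr H α x ∂sphMeasure n := by
      refine integral_nonneg fun x => ?_
      refine mul_nonneg (Real.rpow_nonneg (h.pos x).le _) ?_
      exact div_nonneg (mul_nonneg (h.Ra_pos α (sph_ne x)).le (h.hs_nonneg x _)) (sq_nonneg _)
    have : (α + α ^ 2) * ∫ x : sphere (0 : Euc n) 1, H x ^ (p+1) * Qr H α x ∂sphMeasure n ≤ 0 :=
      mul_nonpos_of_nonpos_of_nonneg (by nlinarith) hq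
    linarith
  · intro k _
    have c1 : Continuous fun x : sphere (0 : Euc n) 1 => wk H α k x := by
      unfold wk
      have c2 : Continuous fun x : sphere (0 : Euc n) 1 => α * Ra H α x * gradient H x k / ‖gradient H x‖ ^ 2 :=
        (((continuous_const.mul (h.cR α)).mul (h.cXi k))).div (h.cX.norm.pow 2) fun x => pow_ne_zero _ (norm_ne_zero_iff.2 (h.grad_ne x))
      exact ((h.cR α).smul continuous_const).add (c2.smul h.cX)
    exact sph_integrable (h.s.sph.mul (h.s.det_cont.mul ((h.cHs.clm_apply c1).inner c1)))
  · intro k _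
    exact sph_integrable (((h.fk_hom0 α k).s.sph.pow 2).mul h.s.det_cont)

/-- variance identity -/
lemma var_id (h : Body n H) (g : sphere (0 : Euc n) 1 → Euc n) (hg : Continuous g) :
    ∫ x : sphere (0 : Euc n) 1, (bmat n H x).det * ‖g x - (Vol n H)⁻¹ • ∫ y : sphere (0 : Euc n) 1, (bmat n H y).det • g y ∂sphMeasure n‖ ^ 2 ∂sphMeasure n
    = ∫ x : sphere (0 : Euc n) 1, (bmat n H x).det * ‖g x‖ ^ 2 ∂sphMeasure n
      - ‖∫ y : sphere (0 : Euc n) 1, (bmat n H y).det • g y ∂sphMeasure n‖ ^ 2 / Vol n H := by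
  have hV := h.vol_pos
  set m := ∫ y : sphere (0 : Euc n) 1, (bmat n H y).det • g y ∂sphMeasure n with hm
  have hi : Integrable (fun y : sphere (0 : Euc n) 1 => (bmat n H y).det • g y) (sphMeasure n) :=
    (h.s.det_cont.smul hg).integrable_of_hasCompactSupport (HasCompactSupport.of_compactSpace _)
  have e : ∀ x : sphere (0 : Euc n) 1, (bmat n H x).det * ‖g x - (Vol n H)⁻¹ • m‖ ^ 2
      = ((bmat n H x).det * ‖g x‖ ^ 2 - 2 * (Vol n H)⁻¹ * ⟪m, (bmat n H x).det • g x⟫) + ((Vol n H)⁻¹ ^ 2 * ‖m‖ ^ 2) * (bmat n H x).det := by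
    intro x
    rw [norm_sub_sq_real, inner_smul_right, norm_smul, inner_smul_right, real_inner_comm m]
    rw [Real.norm_eq_abs, mul_pow, sq_abs]
    ring
  simp_rw [e]
  have i1 : Integrable (fun x : sphere (0 : Euc n) 1 => (bmat n H x).det * ‖g x‖ ^ 2) (sphMeasure n) :=
    sph_integrable (h.s.det_cont.mul (hg.norm.pow 2))
  have i2 : Integrable (fun x : sphere (0 : Euc n) 1 => ⟪m, (bmat n H x).det • g x⟫) (sphMeasure n) :=
    sph_integrable (continuous_const.inner (h.s.det_cont.smul hg))
  have i4 : Integrable (fun x : sphere (0 : Euc n) 1 => (bmat n H x).det * ‖g x‖ ^ 2 - 2 * (Vol n H)⁻¹ * ⟪m, (bmat n H x).det • g x⟫) (sphMeasure n) :=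
    i1.sub (i2.const_mul _)
  rw [integral_add i4 ((sph_integrable h.s.det_cont).const_mul _), integral_sub i1 (i2.const_mul _), integral_const_mul, integral_const_mul,
    integral_inner hi, ← hm, real_inner_self_eq_norm_sq]
  change _ + _ * Vol n H = _
  field_simp
  ring

lemma var_ineq (h : Body n H) (hn : 0 < n) (p α : ℝ) (hα0 : α ≤ 0) (hα1 : -1 ≤ α) (hp : 0 < p + 1 + n)
    (hd : ∀ x : sphere (0 : Euc n) 1, (bmat n H x).det = H x ^ p * (Ra H α x)⁻¹)
    (g : sphere (0 : Euc n) 1 → Euc n) (hg : g = fun x : sphere (0 : Euc n) 1 => Ra H α x • (gradient H x - H x • (x : Euc n))) :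
    ∫ x : sphere (0 : Euc n) 1, (bmat n H x).det * ‖g x - (Vol n H)⁻¹ • ∫ y : sphere (0 : Euc n) 1, (bmat n H y).det • g y ∂sphMeasure n‖ ^ 2 ∂sphMeasure n
    ≤ ((p+1)/n) * ‖∫ y : sphere (0 : Euc n) 1, (bmat n H y).det • g y ∂sphMeasure n‖ ^ 2 / Vol n H := by
  have hV := h.vol_pos
  have hR : ∀ x : sphere (0 : Euc n) 1, Ra H α x ≠ 0 := fun x => (h.Ra_pos α (sph_ne x)).ne'
  have hgc : Continuous g := by
    rw [hg]
    exact (h.cR α).smul (h.cX.sub (h.s.sph.smul continuous_subtype_val))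
  rw [var_id h g hgc]
  set m := ∫ y : sphere (0 : Euc n) 1, (bmat n H y).det • g y ∂sphMeasure n with hm
  have hi : Integrable (fun y : sphere (0 : Euc n) 1 => (bmat n H y).det • g y) (sphMeasure n) :=
    (h.s.det_cont.smul hgc).integrable_of_hasCompactSupport (HasCompactSupport.of_compactSpace _)
  have mi : ∀ i, (p+1+n) * m i = n * ∫ x : sphere (0 : Euc n) 1, H x ^ p * gradient H x i ∂sphMeasure n := by
    intro i
    have a := (EuclideanSpace.proj (𝕜 := ℝ) i : Euc n →L[ℝ] ℝ).integral_comp_comm hi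
    rw [← hm] at a
    have b : ∀ x : sphere (0 : Euc n) 1, (EuclideanSpace.proj (𝕜 := ℝ) i : Euc n →L[ℝ] ℝ) ((bmat n H x).det • g x)
        = H x ^ p * gradient H x i - H x ^ (p+1) * (x : Euc n) i := by
      intro x
      have := hR x
      rw [hd, hg, Real.rpow_add_one (h.pos x).ne']
      simp
      field_simp
    simp_rw [b] at a
    have i1 : Integrable (fun x : sphere (0 : Euc n) 1 => H x ^ p * gradient H x i) (sphMeasure n) := sph_integrable ((h.cH _).mul (h.cXi i))
    have i2 : Integrable (fun x : sphere (0 : Euc n) 1 => H x ^ (p+1) * (x : Euc n) i) (sphMeasure n) := sph_integrable ((h.cH _).mul (cont_coord n i))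
    rw [integral_sub i1 i2] at a
    have := div1 h p i
    change _ = m i at a
    rw [← a, mul_sub, ← this]
    ring
  have hA : ∫ x : sphere (0 : Euc n) 1, (bmat n H x).det * ‖g x‖ ^ 2 ∂sphMeasure n
      = ∫ x : sphere (0 : Euc n) 1, H x ^ p * Ra H α x * ‖gradient H x‖ ^ 2 ∂sphMeasure n
       - ∫ x : sphere (0 : Euc n) 1, H x ^ (p+2) * Ra H α x ∂sphMeasure n := by
    have i1 : Integrable (fun x : sphere (0 : Euc n) 1 => H x ^ p * Ra H α x * ‖gradient H x‖ ^ 2) (sphMeasure n) :=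
      sph_integrable (((h.cH p).mul (h.cR α)).mul (h.cX.norm.pow 2))
    have i2 : Integrable (fun x : sphere (0 : Euc n) 1 => H x ^ (p+2) * Ra H α x) (sphMeasure n) :=
      sph_integrable ((h.cH _).mul (h.cR α))
    rw [← integral_sub i1 i2]
    refine integral_congr_ae (Filter.Eventually.of_forall fun x => ?_)
    have := hR x
    simp only [hg]
    rw [norm_smul, mul_pow, norm_sub_sq_real, inner_smul_right, h.euler (sph_ne x), norm_smul, sph_norm x, hd, Real.norm_eq_abs, Real.norm_eq_abs, mul_pow, sq_abs, sq_abs,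
      show p + 2 = p + (2:ℕ) by norm_num, Real.rpow_add_natCast (h.pos x).ne']
    field_simp
    ring
  have key := keyJ h p α hα0 hα1 hd
  rw [← hA] at key
  have hn' : (0:ℝ) < n := by exact_mod_cast hn
  have hM : ∑ k, (∫ x : sphere (0 : Euc n) 1, H x ^ p * gradient H x k ∂sphMeasure n) ^ 2 = ((p+1+n)/n)^2 * ‖m‖ ^ 2 := by
    rw [← real_inner_self_eq_norm_sq, euc_inner, Finset.mul_sum]
    refine Finset.sum_congr rfl fun k _ => ?_
    have : ∫ x : sphere (0 : Euc n) 1, H x ^ p * gradient H x k ∂sphMeasure n = (p+1+n)/n * m k := by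
      rw [div_mul_eq_mul_div, mi k]; field_simp
    rw [this]; ring
  rw [hM] at key
  have k2 : ∫ x : sphere (0 : Euc n) 1, (bmat n H x).det * ‖g x‖ ^ 2 ∂sphMeasure n ≤ (p+1+n)/n * ‖m‖^2 / Vol n H := by
    refine le_of_mul_le_mul_left (key.trans_eq ?_) hp
    field_simp
  refine (sub_le_sub_right k2 _).trans_eq ?_
  field_simp
  ring

lemma const_of (h : Body n H) (hn : 1 ≤ n) (hX : ∀ x : sphere (0 : Euc n) 1, gradient H x = H x • (x : Euc n)) :
    ∃ c : ℝ, ∀ x ∈ sphere (0 : Euc n) 1, H x = c := by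
  have hpre : IsPreconnected ({(0 : Euc n)}ᶜ : Set (Euc n)) := by
    refine (isConnected_compl_singleton_of_one_lt_rank ?_ 0).isPreconnected
    rw [← Module.finrank_eq_rank, finrank_euclideanSpace_fin]
    exact_mod_cast (by omega : 1 < n + 1)
  have hd : ∀ y : Euc n, y ≠ 0 → HasFDerivAt (fun y => ‖y‖⁻¹ * H y) (0 : Euc n →L[ℝ] ℝ) y := by
    intro y hy
    have hy' := norm_pos_iff.2 hy
    have h1 : HasFDerivAt (fun y : Euc n => ‖y‖⁻¹) _ y := (hasDerivAt_inv (norm_ne_zero_iff.2 hy)).comp_hasFDerivAt y (norm_hasFDerivAt hy)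
    refine (h1.mul (h.s.diff hy).hasFDerivAt).congr_fderiv ?_
    have hg : gradient H y = (H y / ‖y‖ ^ 2) • y := by
      conv_lhs => rw [← nrm_smul y hy]
      rw [h.grad_hom hy' (sph_ne _), hX]
      simp only [nrm]
      rw [h.hom _ (inv_pos.2 hy'), smul_smul]
      congr 1
      field_simp
    ext v
    simp only [_root_.add_apply, _root_.smul_apply, smul_eq_mul, innerSL_apply_apply, _root_.zero_apply]
    rw [← grad_inner, hg, inner_smul_left]
    simp
    field_simp
    ring
  have hc : ∀ x : Euc n, x ≠ 0 → ∀ y : Euc n, y ≠ 0 → ‖x‖⁻¹ * H x = ‖y‖⁻¹ * H y := by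
    intro x hx y hy
    exact isOpen_compl_singleton.is_const_of_fderiv_eq_zero hpre (fun z hz => (hd z hz).differentiableAt.differentiableWithinAt)
      (fun z hz => (hd z hz).fderiv) hx hy
  have h0 : (EuclideanSpace.single 0 1 : Euc n) ∈ sphere (0 : Euc n) 1 := by simp
  refine ⟨H (EuclideanSpace.single 0 1), fun x hx => ?_⟩
  have := hc x (sph_ne ⟨x, hx⟩) _ (sph_ne ⟨_, h0⟩)
  rw [sph_norm ⟨x, hx⟩, sph_norm ⟨_, h0⟩] at this
  simpa using this

lemma const_main (h : Body n H) (hn : 1 ≤ n) (α : ℝ) (g : sphere (0 : Euc n) 1 → Euc n) (hg : g = fun x : sphere (0 : Euc n) 1 => Ra H α x • (gradient H x - H x • (x : Euc n))) (v : Euc n)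
    (hle : ∫ x : sphere (0 : Euc n) 1, (bmat n H x).det * ‖g x - v‖ ^ 2 ∂sphMeasure n ≤ 0) :
    ∃ c : ℝ, ∀ x ∈ sphere (0 : Euc n) 1, H x = c := by
  have hR : ∀ x : sphere (0 : Euc n) 1, Ra H α x ≠ 0 := fun x => (h.Ra_pos α (sph_ne x)).ne'
  have hgc : Continuous g := by
    rw [hg]
    exact (h.cR α).smul (h.cX.sub (h.s.sph.smul continuous_subtype_val))
  have hz : ∀ x, g x = v := by
    intro x
    by_contra hx
    have hc : Continuous fun x : sphere (0 : Euc n) 1 => (bmat n H x).det * ‖g x - v‖ ^ 2 :=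
      h.s.det_cont.mul ((hgc.sub continuous_const).norm.pow 2)
    have := hc.integral_pos_of_hasCompactSupport_nonneg_nonzero (μ := sphMeasure n) (HasCompactSupport.of_compactSpace _)
      (fun x => mul_nonneg (h.det_pos x).le (sq_nonneg _)) (x := x)
      (mul_ne_zero (h.det_pos x).ne' (pow_ne_zero _ (norm_ne_zero_iff.2 (sub_ne_zero.2 hx))))
    linarith
  have hv : v = 0 := by
    by_contra hv
    have a : ⟪v, (nrm v hv : Euc n)⟫ = 0 := by
      have hz' := hz (nrm v hv)
      rw [hg] at hz'
      simp only at hz'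
      generalize nrm v hv = z at hz' ⊢
      rw [← hz']
      rw [inner_smul_left, inner_sub_left, h.euler (sph_ne _), inner_smul_left, real_inner_self_eq_norm_sq, sph_norm]
      simp
    have b : ⟪v, v⟫ = ‖v‖ * ⟪v, (nrm v hv : Euc n)⟫ := by
      rw [← inner_smul_right, nrm_smul]
    rw [a, mul_zero, inner_self_eq_zero] at b
    exact hv b
  refine const_of h hn fun x => ?_
  have := hz x
  rw [hv, hg] at this
  exact sub_eq_zero.1 ((smul_eq_zero.1 this).resolve_left (hR x))
end fin2

theorem variance_inequality_and_h_const
    (n : ℕ) (hn : 2 ≤ n) (p q α : ℝ) (hα : α = q - (n : ℝ) - 1)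
    (H : Euc n → ℝ) (K : Set (Euc n))
    (hK : K = {y : Euc n | ∀ x : Euc n, ⟪x, y⟫ ≤ H x})
    (hhomog : ∀ c : ℝ, 0 < c → ∀ x : Euc n, H (c • x) = c * H x)
    (hconv : ConvexOn ℝ Set.univ H)
    (hsmooth : ContDiffOn ℝ (⊤ : ℕ∞) H {(0 : Euc n)}ᶜ)
    (hpos : ∀ x ∈ sphere (0 : Euc n) 1, 0 < H x)
    (hposdef : ∀ x ∈ sphere (0 : Euc n) 1, (bmat n H x).PosDef)
    (heq : ∀ x ∈ sphere (0 : Euc n) 1,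
      H x ^ (p - 1) * ‖gradient H x‖ ^ ((n : ℝ) + 1 - q) * gaussCurv n H x = 1)
    (hp1 : -((n : ℝ) + 1) < p)
    (hq1 : (n : ℝ) ≤ q) (hq2 : q ≤ (n : ℝ) + 1) :
    ((∫ x : sphere (0 : Euc n) 1,
        volDens n H x * ‖(‖gradient H x‖ ^ α • sphGrad n H x)
          - (∫ y : sphere (0 : Euc n) 1, volDens n H y ∂(sphMeasure n))⁻¹ •
              (∫ y : sphere (0 : Euc n) 1,
                volDens n H y • (‖gradient H y‖ ^ α • sphGrad n H y) ∂(sphMeasure n))‖ ^ 2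
        ∂(sphMeasure n))
      ≤ ((p + 1) / n) * ‖∫ y : sphere (0 : Euc n) 1,
            volDens n H y • (‖gradient H y‖ ^ α • sphGrad n H y) ∂(sphMeasure n)‖ ^ 2
          / ∫ y : sphere (0 : Euc n) 1, volDens n H y ∂(sphMeasure n))
    ∧ (p ≤ -1 → ∃ c : ℝ, ∀ x ∈ sphere (0 : Euc n) 1, H x = c) := by
  have h : Body n H := { hom := hhomog, sm := hsmooth, pos := fun x => hpos x x.2, pd := fun x => hposdef x x.2 }
  have hvd : ∀ x : sphere (0 : Euc n) 1, volDens n H x = (bmat n H x).det := by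
    intro x
    have := (h.pos x).ne'
    rw [volDens, sigman]; field_simp
  have hd : ∀ x : sphere (0 : Euc n) 1, (bmat n H x).det = H x ^ p * (Ra H α x)⁻¹ := by
    intro x
    have e := heq x x.2
    have hx := h.pos x
    have hdet := h.det_pos x
    rw [gaussCurv, sigman, show (n : ℝ) + 1 - q = -α by rw [hα]; ring, Real.rpow_neg (norm_nonneg _), Real.rpow_sub_one hx.ne'] at e
    change _ * (Ra H α x)⁻¹ * _ = 1 at e
    have hR := h.Ra_pos α (sph_ne x)
    field_simp at e ⊢
    linarith
  set g : sphere (0 : Euc n) 1 → Euc n := fun x => Ra H α x • (gradient H x - H x • (x : Euc n)) with hg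
  have hgx : ∀ x : sphere (0 : Euc n) 1, ‖gradient H (x : Euc n)‖ ^ α • sphGrad n H x = g x := by
    intro x; rw [sphGrad_eq h]; rfl
  simp_rw [hvd, hgx]
  have main := var_ineq h (by omega) p α (by rw [hα]; linarith) (by rw [hα]; linarith) (by linarith) hd g hg
  refine ⟨main, fun hp => ?_⟩
  refine const_main h (by omega) α g hg _ (main.trans ?_)
  refine div_nonpos_of_nonpos_of_nonneg (mul_nonpos_of_nonpos_of_nonneg (div_nonpos_of_nonpos_of_nonneg (by linarith) (Nat.cast_nonneg n)) (sq_nonneg _)) h.vol_nonneg
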